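/- arXiv:1110.0810 — 5 statements merged into one kernel-verified Lean document; each statement's English description precedes it below -/
import Mathlib

section
/- Fix N, n ∈ ℕ with 2n < N and y ∈ ℝ^{N−2n}. Let x = (x⁽¹⁾, x⁽²⁾) ∈ ℝ^n × ℝ^n be such that all coordinates x_1⁽¹⁾, …, x_n⁽¹⁾, x_1⁽²⁾, …, x_n⁽²⁾, y_1, …, y_{N−2n} are pairwise distinct. Then H_y is twice differentiable at x and for every v ∈ ℝ^{2n} (writing v_i for the component paired with x_i⁽¹⁾ and v_{i+n} for the component paired with x_i⁽²⁾), the second directional derivative satisfies ⟨v, D²H_y(x) v⟩ = N‖v‖² + Σ_{i=1}^n Σ_{k=1}^{N−2n} [ 2v_i²/(x_i⁽¹⁾ − y_k)² + 2v_{i+n}²/(x_i⁽²⁾ − y_k)² ] + Σ_{i=1}^n Σ_{j≠i} [ (v_i − v_j)²/(x_i⁽¹⁾ − x_j⁽¹⁾)² + (v_{i+n} − v_{j+n})²/(x_i⁽²⁾ − x_j⁽²⁾)² ] + 2 Σ_{i=1}^n Σ_{j=1}^n (v_i − v_{j+n})²/(x_i⁽¹⁾ − x_j⁽²⁾)². 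-/
noncomputable section

/-- The two-cluster Hamiltonian `H_y` as a function on `ℝ^{2n}` (Euclidean space), where the
first `n` coordinates are `x⁽¹⁾` and the last `n` coordinates are `x⁽²⁾`. -/
def clusterHam (N n : ℕ) (y : Fin (N - 2 * n) → ℝ)
    (x : EuclideanSpace ℝ (Fin (n + n))) : ℝ :=
  (N : ℝ) * ((1 / 2) * ∑ i : Fin n, ((x (Fin.castAdd n i)) ^ 2 + (x (Fin.natAdd n i)) ^ 2)
    - (1 / N) * ∑ i : Fin n, ∑ j ∈ Finset.Ioi i,
        Real.log ((x (Fin.castAdd n i) - x (Fin.castAdd n j)) ^ 2)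
    - (1 / N) * ∑ i : Fin n, ∑ j ∈ Finset.Ioi i,
        Real.log ((x (Fin.natAdd n i) - x (Fin.natAdd n j)) ^ 2)
    - (1 / N) * ∑ i : Fin n, ∑ j : Fin n,
        Real.log ((x (Fin.castAdd n i) - x (Fin.natAdd n j)) ^ 2)
    - (1 / N) * ∑ k, ∑ i : Fin n,
        (Real.log ((x (Fin.castAdd n i) - y k) ^ 2)
          + Real.log ((x (Fin.natAdd n i) - y k) ^ 2)))

/-- `f` is `C²` at `x` with Hessian quadratic form `q`. -/
def HasQuad {E : Type*} [NormedAddCommGroup E] [NormedSpace ℝ E] (f : E → ℝ) (x : E)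
    (q : E → ℝ) : Prop :=
  ContDiffAt ℝ 2 f x ∧ ∀ v, fderiv ℝ (fderiv ℝ f) x v v = q v

section
variable {E : Type*} [NormedAddCommGroup E] [NormedSpace ℝ E] {x : E}

lemma cd_eventually {f : E → ℝ} (hf : ContDiffAt ℝ 2 f x) :
    ∀ᶠ z in nhds x, DifferentiableAt ℝ f z := by
  filter_upwards [hf.eventually (by simp)] with z hz
  exact hz.differentiableAt (by simp)

lemma cd_fderiv {f : E → ℝ} (hf : ContDiffAt ℝ 2 f x) :
    DifferentiableAt ℝ (fderiv ℝ f) x :=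
  (hf.fderiv_right (m := 1) (by norm_num)).differentiableAt (by simp)

lemma HasQuad.add {f g : E → ℝ} {q r : E → ℝ} (hf : HasQuad f x q) (hg : HasQuad g x r) :
    HasQuad (fun z => f z + g z) x (fun v => q v + r v) := by
  refine ⟨hf.1.add hg.1, fun v => ?_⟩
  have h : fderiv ℝ (fun z => f z + g z) =ᶠ[nhds x] fun z => fderiv ℝ f z + fderiv ℝ g z := by
    filter_upwards [cd_eventually hf.1, cd_eventually hg.1] with z h1 h2
    exact fderiv_fun_add h1 h2
  rw [h.fderiv_eq, fderiv_fun_add (cd_fderiv hf.1) (cd_fderiv hg.1)]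
  simp [hf.2, hg.2]

lemma HasQuad.const_mul {f : E → ℝ} {q : E → ℝ} (c : ℝ) (hf : HasQuad f x q) :
    HasQuad (fun z => c * f z) x (fun v => c * q v) := by
  refine ⟨contDiffAt_const.mul hf.1, fun v => ?_⟩
  have h : fderiv ℝ (fun z => c * f z) =ᶠ[nhds x] fun z => c • fderiv ℝ f z := by
    filter_upwards [cd_eventually hf.1] with z h1
    exact fderiv_const_mul h1 c
  rw [h.fderiv_eq, fderiv_fun_const_smul (cd_fderiv hf.1)]
  simp [hf.2]

lemma HasQuad.sub {f g : E → ℝ} {q r : E → ℝ} (hf : HasQuad f x q) (hg : HasQuad g x r) :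
    HasQuad (fun z => f z - g z) x (fun v => q v - r v) := by
  have := hf.add (hg.const_mul (-1))
  simpa only [neg_one_mul, ← sub_eq_add_neg] using this

lemma HasQuad.zero : HasQuad (fun _ : E => (0 : ℝ)) x (fun _ => 0) := by
  refine ⟨contDiffAt_const, fun v => ?_⟩
  simp

lemma HasQuad.sum {ι : Type*} {s : Finset ι} {f : ι → E → ℝ} {q : ι → E → ℝ}
    (h : ∀ i ∈ s, HasQuad (f i) x (q i)) :
    HasQuad (fun z => ∑ i ∈ s, f i z) x (fun v => ∑ i ∈ s, q i v) := by
  classical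
  induction s using Finset.induction_on with
  | empty => simpa using HasQuad.zero
  | insert a s ha ih =>
    simp only [Finset.sum_insert ha]
    exact (h a (by simp)).add (ih fun i hi => h i (by simp [hi]))

lemma HasQuad.comp_affine (L : E →L[ℝ] ℝ) (c : ℝ) {ph dph : ℝ → ℝ} {dd : ℝ}
    (hc : ContDiffAt ℝ 2 ph (L x - c))
    (h1 : ∀ᶠ u in nhds (L x - c), HasDerivAt ph (dph u) u)
    (h2 : HasDerivAt dph dd (L x - c)) :
    HasQuad (fun z => ph (L z - c)) x (fun v => dd * L v ^ 2) := by
  have hL : ∀ z, HasFDerivAt (fun z => L z - c) L z := fun z => L.hasFDerivAt.sub_const c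
  refine ⟨ContDiffAt.comp x hc (L.contDiff.contDiffAt.sub contDiffAt_const), fun v => ?_⟩
  have h : fderiv ℝ (fun z => ph (L z - c)) =ᶠ[nhds x] fun z => dph (L z - c) • L := by
    filter_upwards [(hL x).continuousAt.eventually h1] with z hz
    exact (hz.comp_hasFDerivAt z (hL z)).fderiv
  have h3 : HasFDerivAt (fun z => dph (L z - c)) (dd • L) x := h2.comp_hasFDerivAt x (hL x)
  rw [h.fderiv_eq, (h3.smul_const L).fderiv]
  simp
  ring

lemma HasQuad.sq (L : E →L[ℝ] ℝ) :
    HasQuad (fun z => L z ^ 2) x (fun v => 2 * L v ^ 2) := by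
  have := HasQuad.comp_affine (x := x) L 0 (ph := fun u => u ^ 2) (dph := fun u => 2 * u)
    (dd := 2) (contDiffAt_id.pow 2)
    (Filter.Eventually.of_forall fun u => by simpa using hasDerivAt_pow 2 u)
    (by simpa using (hasDerivAt_id (L x - 0)).const_mul 2)
  simpa using this

lemma HasQuad.log (L : E →L[ℝ] ℝ) (c : ℝ) (hx : L x - c ≠ 0) :
    HasQuad (fun z => Real.log ((L z - c) ^ 2)) x (fun v => -(2 * (L v ^ 2 / (L x - c) ^ 2))) := by
  have := HasQuad.comp_affine (x := x) L c (ph := fun u => Real.log (u ^ 2))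
    (dph := fun u => 2 * u⁻¹) (dd := 2 * (-((L x - c) ^ 2)⁻¹))
    ((contDiffAt_id.pow 2).log (by simpa using hx))
    (by
      filter_upwards [isOpen_ne.mem_nhds hx] with u hu
      have hu : u ≠ 0 := hu
      have := (Real.hasDerivAt_log hu).const_mul 2
      simpa [Real.log_pow] using this)
    ((hasDerivAt_inv hx).const_mul 2)
  convert this using 2
  ring
end

lemma sum_erase_eq {n : ℕ} (a : Fin n → Fin n → ℝ) (ha : ∀ i j, a i j = a j i) :
    ∑ i, ∑ j ∈ Finset.univ.erase i, a i j = 2 * ∑ i, ∑ j ∈ Finset.Ioi i, a i j := by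
  have h : ∀ i : Fin n, ∑ j ∈ Finset.univ.erase i, a i j
      = ∑ j ∈ Finset.Ioi i, a i j + ∑ j ∈ Finset.Iio i, a i j := by
    intro i
    rw [← Finset.sum_union]
    · congr 1
      ext j
      simp
      grind
    · rw [Finset.disjoint_left]
      intro j
      simp
      grind
  have hsw : ∑ i : Fin n, ∑ j ∈ Finset.Iio i, a i j = ∑ i, ∑ j ∈ Finset.Ioi i, a i j := by
    rw [Finset.sum_comm' (t' := Finset.univ) (s' := fun j => Finset.Ioi j) (by simp)]
    refine Finset.sum_congr rfl fun i _ => Finset.sum_congr rfl fun j _ => ha _ _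
  simp only [h, Finset.sum_add_distrib, hsw]
  ring

/-- Twice differentiability of the two-cluster Hamiltonian at a configuration with pairwise
distinct coordinates, together with the explicit formula for its Hessian quadratic form. -/
theorem clusterHam_hessian_quadratic_form (N n : ℕ) (hn : 2 * n < N)
    (y : Fin (N - 2 * n) → ℝ) (x : EuclideanSpace ℝ (Fin (n + n)))
    (h1 : ∀ i j : Fin n, i ≠ j → x (Fin.castAdd n i) ≠ x (Fin.castAdd n j))
    (h2 : ∀ i j : Fin n, i ≠ j → x (Fin.natAdd n i) ≠ x (Fin.natAdd n j))
    (h12 : ∀ i j : Fin n, x (Fin.castAdd n i) ≠ x (Fin.natAdd n j))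
    (hy1 : ∀ (i : Fin n) (k : Fin (N - 2 * n)), x (Fin.castAdd n i) ≠ y k)
    (hy2 : ∀ (i : Fin n) (k : Fin (N - 2 * n)), x (Fin.natAdd n i) ≠ y k)
    (hyy : ∀ k l : Fin (N - 2 * n), k ≠ l → y k ≠ y l) :
    ContDiffAt ℝ 2 (clusterHam N n y) x ∧
      ∀ v : EuclideanSpace ℝ (Fin (n + n)),
        fderiv ℝ (fderiv ℝ (clusterHam N n y)) x v v
          = (N : ℝ) * ‖v‖ ^ 2
            + (∑ i : Fin n, ∑ k,
                (2 * (v (Fin.castAdd n i)) ^ 2 / (x (Fin.castAdd n i) - y k) ^ 2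
                  + 2 * (v (Fin.natAdd n i)) ^ 2 / (x (Fin.natAdd n i) - y k) ^ 2))
            + (∑ i : Fin n, ∑ j ∈ Finset.univ.erase i,
                ((v (Fin.castAdd n i) - v (Fin.castAdd n j)) ^ 2
                    / (x (Fin.castAdd n i) - x (Fin.castAdd n j)) ^ 2
                  + (v (Fin.natAdd n i) - v (Fin.natAdd n j)) ^ 2
                    / (x (Fin.natAdd n i) - x (Fin.natAdd n j)) ^ 2))
            + 2 * ∑ i : Fin n, ∑ j : Fin n,
                (v (Fin.castAdd n i) - v (Fin.natAdd n j)) ^ 2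
                  / (x (Fin.castAdd n i) - x (Fin.natAdd n j)) ^ 2 := by
  have hN : (N : ℝ) ≠ 0 := by
    have : N ≠ 0 := by omega
    exact_mod_cast this
  let P : Fin (n + n) → (EuclideanSpace ℝ (Fin (n + n)) →L[ℝ] ℝ) := fun a =>
    EuclideanSpace.proj a
  have hsq : ∀ a, HasQuad (fun z : EuclideanSpace ℝ (Fin (n + n)) => z a ^ 2) x
      (fun v => 2 * v a ^ 2) := fun a => HasQuad.sq (P a)
  have hl2 : ∀ a b, x a ≠ x b →
      HasQuad (fun z : EuclideanSpace ℝ (Fin (n + n)) => Real.log ((z a - z b) ^ 2)) x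
        (fun v => -(2 * ((v a - v b) ^ 2 / (x a - x b) ^ 2))) := by
    intro a b hab
    have := HasQuad.log (x := x) (P a - P b) 0 (by simpa [P, sub_eq_zero] using hab)
    simpa [P] using this
  have hl1 : ∀ a c, x a ≠ c →
      HasQuad (fun z : EuclideanSpace ℝ (Fin (n + n)) => Real.log ((z a - c) ^ 2)) x
        (fun v => -(2 * (v a ^ 2 / (x a - c) ^ 2))) := by
    intro a c hab
    exact HasQuad.log (x := x) (P a) c (by simpa [P, sub_eq_zero] using hab)
  have key := HasQuad.const_mul (N : ℝ) (((((HasQuad.const_mul (1 / 2)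
    (HasQuad.sum (s := Finset.univ) fun (i : Fin n) _ =>
      (hsq (Fin.castAdd n i)).add (hsq (Fin.natAdd n i)))).sub
    (HasQuad.const_mul (1 / (N : ℝ)) (HasQuad.sum (s := Finset.univ) fun (i : Fin n) _ =>
      HasQuad.sum (s := Finset.Ioi i) fun j hj => hl2 (Fin.castAdd n i) (Fin.castAdd n j)
        (h1 i j (Finset.mem_Ioi.1 hj).ne)))).sub
    (HasQuad.const_mul (1 / (N : ℝ)) (HasQuad.sum (s := Finset.univ) fun (i : Fin n) _ =>
      HasQuad.sum (s := Finset.Ioi i) fun j hj => hl2 (Fin.natAdd n i) (Fin.natAdd n j)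
        (h2 i j (Finset.mem_Ioi.1 hj).ne)))).sub
    (HasQuad.const_mul (1 / (N : ℝ)) (HasQuad.sum (s := Finset.univ) fun (i : Fin n) _ =>
      HasQuad.sum (s := Finset.univ) fun (j : Fin n) _ =>
        hl2 (Fin.castAdd n i) (Fin.natAdd n j) (h12 i j)))).sub
    (HasQuad.const_mul (1 / (N : ℝ)) (HasQuad.sum (s := Finset.univ)
      fun (k : Fin (N - 2 * n)) _ => HasQuad.sum (s := Finset.univ) fun (i : Fin n) _ =>
        (hl1 (Fin.castAdd n i) (y k) (hy1 i k)).add (hl1 (Fin.natAdd n i) (y k) (hy2 i k)))))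
  refine ⟨key.1, fun v => (key.2 v).trans ?_⟩
  beta_reduce
  rw [sum_erase_eq _ (fun i j => by
    rw [sub_sq_comm (v (Fin.castAdd n i)), sub_sq_comm (v (Fin.natAdd n i)),
      sub_sq_comm (x (Fin.castAdd n i)), sub_sq_comm (x (Fin.natAdd n i))])]
  rw [EuclideanSpace.real_norm_sq_eq, Fin.sum_univ_add]
  rw [Finset.sum_comm (s := (Finset.univ : Finset (Fin (N - 2 * n))))]
  simp only [Finset.sum_add_distrib, Finset.sum_neg_distrib, ← Finset.mul_sum, mul_div_assoc]
  field_simp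
  ring
end
end

section
/- Fix n ∈ ℕ, ℓ > 0 and d > 0, and let I_1, I_2 ⊆ ℝ be compact intervals each of length at most ℓ with dist(I_1, I_2) ≥ d. Then for all x⁽¹⁾, z⁽¹⁾, x'⁽¹⁾, z'⁽¹⁾ ∈ I_1^n and all x⁽²⁾, z⁽²⁾, x'⁽²⁾, z'⁽²⁾ ∈ I_2^n one has |R_{(z⁽¹⁾,z⁽²⁾)}(x⁽¹⁾, x⁽²⁾) − R_{(z'⁽¹⁾,z'⁽²⁾)}(x'⁽¹⁾, x'⁽²⁾)| ≤ 12 n² ℓ / d; in particular the oscillation of R over such configurations is at most 12 n² ℓ / d. -/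
noncomputable section

/-- The coupling remainder `R_z(x)` for `x = (x⁽¹⁾, x⁽²⁾)` and `z = (z⁽¹⁾, z⁽²⁾)` in `ℝⁿ × ℝⁿ`. -/
def couplingR (n : ℕ) (z x : (Fin n → ℝ) × (Fin n → ℝ)) : ℝ :=
  (∑ i, ∑ k, (Real.log ((x.1 i - z.2 k) ^ 2) + Real.log ((x.2 i - z.1 k) ^ 2)))
    - ∑ i, ∑ j, Real.log ((x.1 i - x.2 j) ^ 2)

theorem log_sq_sub_le (L d u v : ℝ) (hL : 0 < L) (hd : 0 < d) (hu : d ≤ |u|) (hv : d ≤ |v|)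
    (huv : |u - v| ≤ 2 * L) : Real.log (u ^ 2) - Real.log (v ^ 2) ≤ 4 * L / d := by
  have hu0 : 0 < |u| := lt_of_lt_of_le hd hu
  have hv0 : 0 < |v| := lt_of_lt_of_le hd hv
  have e1 : Real.log (u ^ 2) = 2 * Real.log |u| := by
    rw [Real.log_pow, Real.log_abs]; norm_num
  have e2 : Real.log (v ^ 2) = 2 * Real.log |v| := by
    rw [Real.log_pow, Real.log_abs]; norm_num
  have h1 : Real.log |u| - Real.log |v| ≤ |u| / |v| - 1 := by
    rw [← Real.log_div hu0.ne' hv0.ne']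
    exact Real.log_le_sub_one_of_pos (div_pos hu0 hv0)
  have h2 : |u| / |v| - 1 = (|u| - |v|) / |v| := by field_simp
  have h3 : |u| - |v| ≤ 2 * L := (abs_sub_abs_le_abs_sub u v).trans huv
  have h4 : (|u| - |v|) / |v| ≤ 2 * L / d :=
    (div_le_div_of_nonneg_right h3 hv0.le).trans
      (div_le_div_of_nonneg_left (by positivity) hd hv)
  have h5 : 4 * L / d = 2 * (2 * L / d) := by ring
  rw [e1, e2, h5]
  linarith

theorem abs_log_sq_sub_le (L d u v : ℝ) (hL : 0 < L) (hd : 0 < d) (hu : d ≤ |u|) (hv : d ≤ |v|)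
    (huv : |u - v| ≤ 2 * L) : |Real.log (u ^ 2) - Real.log (v ^ 2)| ≤ 4 * L / d := by
  rw [abs_sub_le_iff]
  exact ⟨log_sq_sub_le L d u v hL hd hu hv huv,
    log_sq_sub_le L d v u hL hd hv hu (by rwa [abs_sub_comm])⟩

/-- Oscillation bound for the coupling remainder over configurations confined to two compact
intervals of length at most `ℓ` at distance at least `d` from each other. -/
theorem couplingR_oscillation_bound (n : ℕ) (ℓ d : ℝ) (hℓ : 0 < ℓ) (hd : 0 < d)
    (a₁ b₁ a₂ b₂ : ℝ) (h₁ : a₁ ≤ b₁) (h₂ : a₂ ≤ b₂)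
    (hlen₁ : b₁ - a₁ ≤ ℓ) (hlen₂ : b₂ - a₂ ≤ ℓ)
    (hdist : ∀ s ∈ Set.Icc a₁ b₁, ∀ t ∈ Set.Icc a₂ b₂, d ≤ |s - t|)
    (x₁ z₁ x₁' z₁' : Fin n → ℝ)
    (hx₁ : ∀ i, x₁ i ∈ Set.Icc a₁ b₁) (hz₁ : ∀ i, z₁ i ∈ Set.Icc a₁ b₁)
    (hx₁' : ∀ i, x₁' i ∈ Set.Icc a₁ b₁) (hz₁' : ∀ i, z₁' i ∈ Set.Icc a₁ b₁)
    (x₂ z₂ x₂' z₂' : Fin n → ℝ)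
    (hx₂ : ∀ i, x₂ i ∈ Set.Icc a₂ b₂) (hz₂ : ∀ i, z₂ i ∈ Set.Icc a₂ b₂)
    (hx₂' : ∀ i, x₂' i ∈ Set.Icc a₂ b₂) (hz₂' : ∀ i, z₂' i ∈ Set.Icc a₂ b₂) :
    |couplingR n (z₁, z₂) (x₁, x₂) - couplingR n (z₁', z₂') (x₁', x₂')|
      ≤ 12 * n ^ 2 * ℓ / d := by
  have key : ∀ s ∈ Set.Icc a₁ b₁, ∀ t ∈ Set.Icc a₂ b₂, ∀ s' ∈ Set.Icc a₁ b₁,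
      ∀ t' ∈ Set.Icc a₂ b₂,
      |Real.log ((s - t) ^ 2) - Real.log ((s' - t') ^ 2)| ≤ 4 * ℓ / d := by
    intro s hs t ht s' hs' t' ht'
    apply abs_log_sq_sub_le ℓ d _ _ hℓ hd (hdist s hs t ht) (hdist s' hs' t' ht')
    obtain ⟨_, _⟩ := hs
    obtain ⟨_, _⟩ := ht
    obtain ⟨_, _⟩ := hs'
    obtain ⟨_, _⟩ := ht'
    rw [abs_le]
    constructor <;> linarith
  have e : couplingR n (z₁, z₂) (x₁, x₂) - couplingR n (z₁', z₂') (x₁', x₂')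
      = ∑ i, ∑ k, ((Real.log ((x₁ i - z₂ k) ^ 2) - Real.log ((x₁' i - z₂' k) ^ 2))
        + (Real.log ((z₁ k - x₂ i) ^ 2) - Real.log ((z₁' k - x₂' i) ^ 2))
        - (Real.log ((x₁ i - x₂ k) ^ 2) - Real.log ((x₁' i - x₂' k) ^ 2))) := by
    unfold couplingR
    simp only [← Finset.sum_sub_distrib]
    refine Finset.sum_congr rfl fun i _ => Finset.sum_congr rfl fun k _ => ?_
    rw [sub_sq_comm (x₂ i), sub_sq_comm (x₂' i)]
    ring
  have hb : ∀ i k, |(Real.log ((x₁ i - z₂ k) ^ 2) - Real.log ((x₁' i - z₂' k) ^ 2))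
        + (Real.log ((z₁ k - x₂ i) ^ 2) - Real.log ((z₁' k - x₂' i) ^ 2))
        - (Real.log ((x₁ i - x₂ k) ^ 2) - Real.log ((x₁' i - x₂' k) ^ 2))| ≤ 12 * ℓ / d := by
    intro i k
    have k1 := abs_le.1 (key _ (hx₁ i) _ (hz₂ k) _ (hx₁' i) _ (hz₂' k))
    have k2 := abs_le.1 (key _ (hz₁ k) _ (hx₂ i) _ (hz₁' k) _ (hx₂' i))
    have k3 := abs_le.1 (key _ (hx₁ i) _ (hx₂ k) _ (hx₁' i) _ (hx₂' k))
    have h5 : 12 * ℓ / d = 3 * (4 * ℓ / d) := by ring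
    rw [h5, abs_le]
    constructor <;> linarith [k1.1, k1.2, k2.1, k2.2, k3.1, k3.2]
  rw [e]
  calc _ ≤ ∑ i : Fin n, ∑ k : Fin n, 12 * ℓ / d :=
        (Finset.abs_sum_le_sum_abs _ _).trans (Finset.sum_le_sum fun i _ =>
          (Finset.abs_sum_le_sum_abs _ _).trans (Finset.sum_le_sum fun k _ => hb i k))
    _ = 12 * n ^ 2 * ℓ / d := by
        simp only [Finset.sum_const, Finset.card_univ, Fintype.card_fin, nsmul_eq_mul]
        ring
end
end

section
/- Let (Ω, 𝔉, λ) be a σ-finite measure space, let H : Ω → ℝ be measurable with 0 < ∫_Ω e^{−H} dλ < ∞, and let R : Ω → ℝ be measurable and bounded with sup R − inf R ≤ ε for some ε ≥ 0. Let μ be the probability measure with density e^{−H}/∫e^{−H}dλ with respect to λ, and let ν be the probability measure with density e^{−H−R}/∫e^{−H−R}dλ with respect to λ. Then for every measurable set A ⊆ Ω, |μ(A) − ν(A)| ≤ e^{ε} − 1; that is, the total variation distance between μ and ν is at most e^{ε} − 1. -/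
open MeasureTheory

noncomputable section

/-- Total variation stability of Gibbs measures: if the Hamiltonian is perturbed by a bounded
measurable `R` of oscillation at most `ε`, every event's probability changes by at most
`e^ε − 1`. -/
theorem gibbs_tv_bound_of_oscillation {Ω : Type*} [MeasurableSpace Ω]
    (lam : Measure Ω) [SigmaFinite lam]
    (H R : Ω → ℝ) (hH : Measurable H) (hR : Measurable R)
    (hHint : Integrable (fun x => Real.exp (-H x)) lam)
    (hHpos : 0 < ∫ x, Real.exp (-H x) ∂lam)
    (C : ℝ) (hRbdd : ∀ x, |R x| ≤ C)
    (ε : ℝ) (hε : 0 ≤ ε) (hosc : ∀ x y, R x - R y ≤ ε)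
    (μ ν : Measure Ω)
    (hμ : μ = lam.withDensity fun x =>
      ENNReal.ofReal (Real.exp (-H x) / ∫ x', Real.exp (-H x') ∂lam))
    (hν : ν = lam.withDensity fun x =>
      ENNReal.ofReal (Real.exp (-H x - R x) / ∫ x', Real.exp (-H x' - R x') ∂lam)) :
    ∀ A : Set Ω, MeasurableSet A → |(μ A).toReal - (ν A).toReal| ≤ Real.exp ε - 1 := by
  intro A hA
  have hne : Nonempty Ω := by
    by_contra h
    rw [not_nonempty_iff] at h
    simp [Measure.eq_zero_of_isEmpty] at hHpos
  obtain ⟨m, hm1, hm2⟩ : ∃ m : ℝ, (∀ x, m ≤ R x) ∧ ∀ x, R x ≤ m + ε := by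
    refine ⟨⨅ x, R x, fun x => ciInf_le ⟨-C, ?_⟩ x, fun x => ?_⟩
    · rintro _ ⟨y, rfl⟩
      exact (abs_le.mp (hRbdd y)).1
    · have : R x - ε ≤ ⨅ y, R y := le_ciInf fun y => by linarith [hosc x y]
      linarith
  have hup : ∀ x, Real.exp (-H x - R x) ≤ Real.exp (-m) * Real.exp (-H x) := fun x => by
    rw [← Real.exp_add]
    exact Real.exp_le_exp.mpr (by linarith [hm1 x])
  have hlo : ∀ x, Real.exp (-m) * Real.exp (-H x) ≤ Real.exp ε * Real.exp (-H x - R x) :=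
    fun x => by
      rw [← Real.exp_add, ← Real.exp_add]
      exact Real.exp_le_exp.mpr (by linarith [hm2 x])
  have hint : Integrable (fun x => Real.exp (-H x - R x)) lam := by
    refine (hHint.const_mul (Real.exp (-m))).mono' ?_ (Filter.Eventually.of_forall fun x => ?_)
    · exact (Real.measurable_exp.comp (hH.neg.sub hR)).aestronglyMeasurable
    · rw [Real.norm_eq_abs, abs_of_pos (Real.exp_pos _)]
      exact hup x
  have key : ∀ B : Set Ω,
      (∫ x in B, Real.exp (-H x - R x) ∂lam) ≤ Real.exp (-m) * ∫ x in B, Real.exp (-H x) ∂lam ∧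
      Real.exp (-m) * (∫ x in B, Real.exp (-H x) ∂lam) ≤
        Real.exp ε * ∫ x in B, Real.exp (-H x - R x) ∂lam := by
    intro B
    rw [← integral_const_mul, ← integral_const_mul]
    exact ⟨integral_mono hint.restrict (hHint.restrict.const_mul _) hup,
      integral_mono (hHint.restrict.const_mul _) (hint.restrict.const_mul _) hlo⟩
  have hval : ∀ (f : Ω → ℝ), Integrable f lam → (∀ x, 0 ≤ f x) →
      ∀ Z : ℝ, 0 ≤ Z → ((lam.withDensity fun x => ENNReal.ofReal (f x / Z)) A).toReal
        = (∫ x in A, f x ∂lam) / Z := by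
    intro f hf h0 Z hZ
    rw [withDensity_apply _ hA, ← integral_div, integral_eq_lintegral_of_nonneg_ae]
    · exact Filter.Eventually.of_forall fun x => div_nonneg (h0 x) hZ
    · exact (hf.restrict.div_const Z).aestronglyMeasurable
  have hle : ∀ (f : Ω → ℝ), Integrable f lam → (∀ x, 0 ≤ f x) →
      (∫ x in A, f x ∂lam) ≤ ∫ x, f x ∂lam := fun f hf h0 =>
    setIntegral_le_integral hf (Filter.Eventually.of_forall h0)
  have kA := key A
  have kU := key Set.univ
  rw [setIntegral_univ, setIntegral_univ] at kU
  have ha1 := hle _ hHint (fun x => (Real.exp_pos _).le)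
  have hb1 := hle _ hint (fun x => (Real.exp_pos _).le)
  have ha0 : 0 ≤ ∫ x in A, Real.exp (-H x) ∂lam := integral_nonneg fun x => (Real.exp_pos _).le
  have hb0 : 0 ≤ ∫ x in A, Real.exp (-H x - R x) ∂lam :=
    integral_nonneg fun x => (Real.exp_pos _).le
  have hc := Real.exp_pos (-m)
  have he := Real.exp_pos ε
  have he1 : 1 ≤ Real.exp ε := Real.one_le_exp hε
  have hZ' : 0 < ∫ x, Real.exp (-H x - R x) ∂lam :=
    pos_of_mul_pos_right ((mul_pos hc hHpos).trans_le kU.2) he.le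
  rw [hμ, hν, hval _ hHint (fun x => (Real.exp_pos _).le) _ hHpos.le,
    hval _ hint (fun x => (Real.exp_pos _).le) _ hZ'.le]
  generalize (∫ x in A, Real.exp (-H x) ∂lam) = a at *
  generalize (∫ x in A, Real.exp (-H x - R x) ∂lam) = b at *
  generalize (∫ x, Real.exp (-H x) ∂lam) = Z at *
  generalize (∫ x, Real.exp (-H x - R x) ∂lam) = W at *
  generalize Real.exp (-m) = c at *
  generalize Real.exp ε = e at *
  have h1 : b / W ≤ e * (a / Z) := by
    rw [← mul_div_assoc, div_le_div_iff₀ hZ' hHpos]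
    calc b * Z ≤ (c * a) * Z := mul_le_mul_of_nonneg_right kA.1 hHpos.le
      _ = a * (c * Z) := by ring
      _ ≤ a * (e * W) := mul_le_mul_of_nonneg_left kU.2 ha0
      _ = e * a * W := by ring
  have h2 : a / Z ≤ e * (b / W) := by
    rw [← mul_div_assoc, div_le_div_iff₀ hHpos hZ']
    calc a * W ≤ a * (c * Z) := mul_le_mul_of_nonneg_left kU.1 ha0
      _ = (c * a) * Z := by ring
      _ ≤ (e * b) * Z := mul_le_mul_of_nonneg_right kA.2 hHpos.le
  have hp : a / Z ≤ 1 := (div_le_one hHpos).mpr ha1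
  have hq : b / W ≤ 1 := (div_le_one hZ').mpr hb1
  rw [abs_le]
  constructor <;> nlinarith
end
end

section
/- Fix N, n ∈ ℕ with 2n < N, let y ∈ ℝ^{N−2n} have strictly increasing coordinates, and let L_1 < L_2 be indices with L_1 + 1 ≤ N − 2n and L_2 − n ≥ 1, L_2 − n + 1 ≤ N − 2n. Set I_1 = [y_{L_1}, y_{L_1+1}] and I_2 = [y_{L_2−n}, y_{L_2−n+1}], assume both are nondegenerate of length at most ℓ and that dist(I_1, I_2) ≥ d > 0. Fix z⁽¹⁾ ∈ (I_1^n)↑ and z⁽²⁾ ∈ (I_2^n)↑. Let μ_y be the probability measure on (I_1^n)↑ × (I_2^n)↑ with density proportional to e^{−H_y(x)} with respect to Lebesgue measure, let μ¹ be the probability measure on (I_1^n)↑ with density proportional to e^{−H¹_{y,z⁽²⁾}(w)}, and let μ² be the probability measure on (I_2^n)↑ with density proportional to e^{−H²_{y,z⁽¹⁾}(w)}. Then ‖μ_y − μ¹ ⊗ μ²‖_TV ≤ exp(12 n² ℓ / d) − 1. -/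
noncomputable section

/-- The two-cluster Hamiltonian `H_y(x)` for `x = (x⁽¹⁾, x⁽²⁾) ∈ ℝⁿ × ℝⁿ` and external
configuration `y ∈ ℝ^{N−2n}`. -/
def twoClusterHam (N n : ℕ) (y : Fin (N - 2 * n) → ℝ)
    (x : (Fin n → ℝ) × (Fin n → ℝ)) : ℝ :=
  (N : ℝ) * ((1 / 2) * ∑ i, ((x.1 i) ^ 2 + (x.2 i) ^ 2)
    - (1 / N) * ∑ i, ∑ j ∈ Finset.Ioi i, Real.log ((x.1 i - x.1 j) ^ 2)
    - (1 / N) * ∑ i, ∑ j ∈ Finset.Ioi i, Real.log ((x.2 i - x.2 j) ^ 2)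
    - (1 / N) * ∑ i, ∑ j, Real.log ((x.1 i - x.2 j) ^ 2)
    - (1 / N) * ∑ k, ∑ i, (Real.log ((x.1 i - y k) ^ 2) + Real.log ((x.2 i - y k) ^ 2)))

/-- The one-cluster Hamiltonian `H¹_{y,z}(w)` (and `H²_{y,z}`, given by the same formula). -/
def oneClusterHam (N n : ℕ) (y : Fin (N - 2 * n) → ℝ) (z : Fin n → ℝ)
    (w : Fin n → ℝ) : ℝ :=
  (N : ℝ) * ((1 / 2) * ∑ i, (w i) ^ 2
    - (1 / N) * ∑ i, ∑ j ∈ Finset.Ioi i, Real.log ((w i - w j) ^ 2)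
    - (1 / N) * ∑ k, ∑ i, Real.log ((w i - y k) ^ 2)
    - (1 / N) * ∑ k : Fin n, ∑ i, Real.log ((w i - z k) ^ 2))

open MeasureTheory

/-- Abstract comparison of two normalised densities with bounded ratio. -/
lemma gibbs_compare {X : Type*} [MeasurableSpace X] (m : Measure X) (S : Set X)
    (hS : MeasurableSet S) (f g : X → ℝ) (hf : Measurable f) (hg : Measurable g)
    (hf0 : ∀ x, 0 < f x) (hg0 : ∀ x, 0 < g x) (K : ℝ) (hK : 0 ≤ K) (x0 : X) (hx0 : x0 ∈ S)
    (hfg : ∀ x ∈ S, ∀ x' ∈ S, f x * g x' ≤ K * (f x' * g x)) :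
    ∀ x ∈ S, f x / (∫ x' in S, f x' ∂m) ≤ K * (g x / ∫ x' in S, g x' ∂m) := by
  intro x hx
  have hfn : 0 ≤ ∫ x' in S, f x' ∂m := integral_nonneg fun x => (hf0 x).le
  have hgn : 0 ≤ ∫ x' in S, g x' ∂m := integral_nonneg fun x => (hg0 x).le
  rcases hfn.eq_or_lt with h0 | hfpos
  · rw [← h0, div_zero]
    exact mul_nonneg hK (div_nonneg (hg0 x).le hgn)
  have hfi : Integrable f (m.restrict S) := by
    by_contra h
    rw [integral_undef h] at hfpos
    exact lt_irrefl _ hfpos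
  have hgi : Integrable g (m.restrict S) := by
    refine Integrable.mono' (hfi.const_mul (K * g x0 / f x0)) hg.aestronglyMeasurable ?_
    filter_upwards [ae_restrict_mem hS] with a ha
    rw [Real.norm_of_nonneg (hg0 a).le]
    have := hfg x0 hx0 a ha
    have h1 := hf0 x0
    rw [div_mul_eq_mul_div, le_div_iff₀ h1]
    nlinarith
  have key : f x * ∫ x' in S, g x' ∂m ≤ K * g x * ∫ x' in S, f x' ∂m := by
    rw [← integral_const_mul, ← integral_const_mul]
    refine integral_mono_ae (hgi.const_mul _) (hfi.const_mul _) ?_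
    filter_upwards [ae_restrict_mem hS] with a ha
    have := hfg x hx a ha
    nlinarith
  have hgpos : 0 < ∫ x' in S, g x' ∂m := by
    have hm : m.restrict S ≠ 0 := by
      intro h
      rw [h, integral_zero_measure] at hfpos
      exact lt_irrefl _ hfpos
    rw [integral_pos_iff_support_of_nonneg (fun x => (hg0 x).le) hgi]
    have : Function.support g = Set.univ := by
      ext a; simp [(hg0 a).ne']
    rw [this]
    exact (Measure.measure_univ_pos).2 hm
  rw [← mul_div_assoc, div_le_div_iff₀ hfpos hgpos]
  exact key

lemma gibbs_mass {X : Type*} [MeasurableSpace X] (m : Measure X) 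
    (f : X → ℝ) (hf0 : ∀ x, 0 < f x) :
    (m.withDensity fun x => ENNReal.ofReal (f x / ∫ x', f x' ∂m)) Set.univ ≤ 1 := by
  rw [withDensity_apply _ MeasurableSet.univ, Measure.restrict_univ]
  have hfn : 0 ≤ ∫ x', f x' ∂m := integral_nonneg fun x => (hf0 x).le
  by_cases h : Integrable f m
  · rw [← ofReal_integral_eq_lintegral_ofReal (h.div_const _)
      (Filter.Eventually.of_forall fun x => div_nonneg (hf0 x).le hfn), integral_div]
    rw [← ENNReal.ofReal_one]
    exact ENNReal.ofReal_le_ofReal (div_self_le_one _)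
  · simp [integral_undef h]

lemma real_diff_bound {X : Type*} [MeasurableSpace X] (P Q : Measure X) (hP : P Set.univ ≤ 1)
    (hQ : Q Set.univ ≤ 1) (K : ℝ) (hK : 1 ≤ K) (A : Set X)
    (h1 : P A ≤ ENNReal.ofReal K * Q A) (h2 : Q A ≤ ENNReal.ofReal K * P A) :
    |(P A).toReal - (Q A).toReal| ≤ K - 1 := by
  have hPA : P A ≤ 1 := (measure_mono (Set.subset_univ _)).trans hP
  have hQA : Q A ≤ 1 := (measure_mono (Set.subset_univ _)).trans hQ
  have hPt : P A ≠ ⊤ := ne_top_of_le_ne_top ENNReal.one_ne_top hPA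
  have hQt : Q A ≠ ⊤ := ne_top_of_le_ne_top ENNReal.one_ne_top hQA
  have a1 := ENNReal.toReal_mono (ENNReal.mul_ne_top ENNReal.ofReal_ne_top hQt) h1
  have a2 := ENNReal.toReal_mono (ENNReal.mul_ne_top ENNReal.ofReal_ne_top hPt) h2
  have b1 := ENNReal.toReal_mono ENNReal.one_ne_top hPA
  have b2 := ENNReal.toReal_mono ENNReal.one_ne_top hQA
  rw [ENNReal.toReal_mul, ENNReal.toReal_ofReal (by linarith)] at a1 a2
  rw [ENNReal.toReal_one] at b1 b2
  rw [abs_le]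
  constructor <;> nlinarith

lemma log_osc {d ℓ s t s' t' : ℝ} (hd : 0 < d) (h : d ≤ |s - t|) (h' : d ≤ |s' - t'|)
    (hs : |s - s'| ≤ ℓ) (ht : |t - t'| ≤ ℓ) :
    Real.log ((s - t) ^ 2) - Real.log ((s' - t') ^ 2) ≤ 4 * ℓ / d := by
  have hp : 0 < |s - t| := by linarith
  have hp' : 0 < |s' - t'| := by linarith
  rw [← sq_abs (s - t), ← sq_abs (s' - t'), Real.log_pow, Real.log_pow]
  have hl : 0 ≤ ℓ := (abs_nonneg _).trans hs
  have h3 : |s - t| ≤ |s' - t'| + 2 * ℓ := by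
    have : s - t = (s' - t') + ((s - s') - (t - t')) := by ring
    rw [this]
    have e1 := abs_add_le (s' - t') ((s - s') - (t - t'))
    have e2 := abs_sub (s - s') (t - t')
    linarith
  have h4 : Real.log |s - t| - Real.log |s' - t'| ≤ 2 * ℓ / d := by
    rw [← Real.log_div hp.ne' hp'.ne']
    have := Real.log_le_sub_one_of_pos (div_pos hp hp')
    have h5 : |s - t| / |s' - t'| - 1 ≤ 2 * ℓ / |s' - t'| := by
      rw [div_sub_one hp'.ne']
      gcongr
      linarith
    have h6 : 2 * ℓ / |s' - t'| ≤ 2 * ℓ / d := by gcongr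
    linarith
  have : 4 * ℓ / d = 2 * (2 * ℓ / d) := by ring
  push_cast
  linarith

lemma ham_split (N n : ℕ) (hN : N ≠ 0) (y : Fin (N - 2 * n) → ℝ) (z₁ z₂ : Fin n → ℝ)
    (x : (Fin n → ℝ) × (Fin n → ℝ)) :
    twoClusterHam N n y x = oneClusterHam N n y z₂ x.1 + oneClusterHam N n y z₁ x.2
      + couplingR n (z₁, z₂) x := by
  have hN' : (N : ℝ) ≠ 0 := by exact_mod_cast hN
  unfold twoClusterHam oneClusterHam couplingR
  simp only [Finset.sum_add_distrib]
  rw [Finset.sum_comm (f := fun (k : Fin n) i => Real.log ((x.1 i - z₂ k) ^ 2)),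
    Finset.sum_comm (f := fun (k : Fin n) i => Real.log ((x.2 i - z₁ k) ^ 2))]
  field_simp
  ring

lemma couplingR_osc (n : ℕ) (d ℓ : ℝ) (hd : 0 < d) (I₁ I₂ : Set ℝ)
    (hl₁ : ∀ s ∈ I₁, ∀ t ∈ I₁, |s - t| ≤ ℓ) (hl₂ : ∀ s ∈ I₂, ∀ t ∈ I₂, |s - t| ≤ ℓ)
    (hdist : ∀ s ∈ I₁, ∀ t ∈ I₂, d ≤ |s - t|)
    (z x x' : (Fin n → ℝ) × (Fin n → ℝ))
    (hz₁ : ∀ i, z.1 i ∈ I₁) (hz₂ : ∀ i, z.2 i ∈ I₂)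
    (hx₁ : ∀ i, x.1 i ∈ I₁) (hx₂ : ∀ i, x.2 i ∈ I₂)
    (hx'₁ : ∀ i, x'.1 i ∈ I₁) (hx'₂ : ∀ i, x'.2 i ∈ I₂) :
    couplingR n z x' - couplingR n z x ≤ 12 * n ^ 2 * ℓ / d := by
  have hdist' : ∀ s ∈ I₂, ∀ t ∈ I₁, d ≤ |s - t| := fun s hs t ht => by
    rw [abs_sub_comm]; exact hdist t ht s hs
  have e : couplingR n z x' - couplingR n z x = ∑ i, ∑ k,
      ((Real.log ((x'.1 i - z.2 k) ^ 2) - Real.log ((x.1 i - z.2 k) ^ 2))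
      + (Real.log ((x'.2 i - z.1 k) ^ 2) - Real.log ((x.2 i - z.1 k) ^ 2))
      + (Real.log ((x.1 i - x.2 k) ^ 2) - Real.log ((x'.1 i - x'.2 k) ^ 2))) := by
    unfold couplingR
    simp only [Finset.sum_add_distrib, Finset.sum_sub_distrib]
    ring
  have b : ∀ i k : Fin n,
      ((Real.log ((x'.1 i - z.2 k) ^ 2) - Real.log ((x.1 i - z.2 k) ^ 2))
      + (Real.log ((x'.2 i - z.1 k) ^ 2) - Real.log ((x.2 i - z.1 k) ^ 2))
      + (Real.log ((x.1 i - x.2 k) ^ 2) - Real.log ((x'.1 i - x'.2 k) ^ 2))) ≤ 12 * ℓ / d := by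
    intro i k
    have a1 := log_osc hd (hdist _ (hx'₁ i) _ (hz₂ k)) (hdist _ (hx₁ i) _ (hz₂ k))
      (hl₁ _ (hx'₁ i) _ (hx₁ i)) (hl₂ _ (hz₂ k) _ (hz₂ k))
    have a2 := log_osc hd (hdist' _ (hx'₂ i) _ (hz₁ k)) (hdist' _ (hx₂ i) _ (hz₁ k))
      (hl₂ _ (hx'₂ i) _ (hx₂ i)) (hl₁ _ (hz₁ k) _ (hz₁ k))
    have a3 := log_osc hd (hdist _ (hx₁ i) _ (hx₂ k)) (hdist _ (hx'₁ i) _ (hx'₂ k))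
      (hl₁ _ (hx₁ i) _ (hx'₁ i)) (hl₂ _ (hx₂ k) _ (hx'₂ k))
    have : 12 * ℓ / d = 3 * (4 * ℓ / d) := by ring
    linarith
  rw [e]
  refine (Finset.sum_le_sum fun i _ => Finset.sum_le_sum fun k _ => b i k).trans (le_of_eq ?_)
  simp only [Finset.sum_const, Finset.card_univ, Fintype.card_fin, nsmul_eq_mul]
  ring

lemma meas_two (N n : ℕ) (y : Fin (N - 2 * n) → ℝ) : Measurable (twoClusterHam N n y) := by
  unfold twoClusterHam
  fun_prop

lemma meas_one (N n : ℕ) (y : Fin (N - 2 * n) → ℝ) (z : Fin n → ℝ) :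
    Measurable (oneClusterHam N n y z) := by
  unfold oneClusterHam
  fun_prop

lemma meas_cone (n : ℕ) (a b : ℝ) :
    MeasurableSet {w : Fin n → ℝ | StrictMono w ∧ ∀ i, w i ∈ Set.Icc a b} := by
  have : {w : Fin n → ℝ | StrictMono w ∧ ∀ i, w i ∈ Set.Icc a b} =
      (⋂ i, ⋂ j, ⋂ (_ : i < j), {w : Fin n → ℝ | w i < w j}) ∩
      ⋂ i, {w : Fin n → ℝ | w i ∈ Set.Icc a b} := by
    ext w; simp [StrictMono]
  rw [this]
  refine MeasurableSet.inter ?_ ?_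
  · refine MeasurableSet.iInter fun i => MeasurableSet.iInter fun j => MeasurableSet.iInter fun _ => ?_
    exact measurableSet_lt (measurable_pi_apply i) (measurable_pi_apply j)
  · exact MeasurableSet.iInter fun i => measurable_pi_apply i measurableSet_Icc

/-- Asymptotic decoupling of the two-cluster conditional equilibrium measure: the conditional
Gibbs measure of two eigenvalue clusters confined to two external gaps `I₁, I₂` of length at
most `ℓ` and at mutual distance at least `d` is within `exp(12n²ℓ/d) − 1` in total variation
of the product of the two decoupled one-cluster Gibbs measures. -/
theorem two_cluster_gibbs_decoupling (N n : ℕ) (hn : 2 * n < N)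
    (y : Fin (N - 2 * n) → ℝ) (hy : StrictMono y)
    (L₁ L₂ : ℕ) (hL : L₁ < L₂) (hnL₂ : n ≤ L₂)
    (hL₁ : L₁ + 1 < N - 2 * n) (hL₂ : L₂ - n + 1 < N - 2 * n)
    (ℓ d : ℝ) (hd : 0 < d)
    (I₁ I₂ : Set ℝ)
    (hI₁ : I₁ = Set.Icc (y ⟨L₁, Nat.lt_of_succ_lt hL₁⟩) (y ⟨L₁ + 1, hL₁⟩))
    (hI₂ : I₂ = Set.Icc (y ⟨L₂ - n, Nat.lt_of_succ_lt hL₂⟩) (y ⟨L₂ - n + 1, hL₂⟩))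
    (hlen₁ : y ⟨L₁ + 1, hL₁⟩ - y ⟨L₁, Nat.lt_of_succ_lt hL₁⟩ ≤ ℓ)
    (hlen₂ : y ⟨L₂ - n + 1, hL₂⟩ - y ⟨L₂ - n, Nat.lt_of_succ_lt hL₂⟩ ≤ ℓ)
    (hdist : ∀ s ∈ I₁, ∀ t ∈ I₂, d ≤ |s - t|)
    (z₁ z₂ : Fin n → ℝ)
    (hz₁ : StrictMono z₁ ∧ ∀ i, z₁ i ∈ I₁) (hz₂ : StrictMono z₂ ∧ ∀ i, z₂ i ∈ I₂)
    (S : Set ((Fin n → ℝ) × (Fin n → ℝ))) (S₁ S₂ : Set (Fin n → ℝ))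
    (hS : S = {x | (StrictMono x.1 ∧ ∀ i, x.1 i ∈ I₁) ∧ StrictMono x.2 ∧ ∀ i, x.2 i ∈ I₂})
    (hS₁ : S₁ = {w | StrictMono w ∧ ∀ i, w i ∈ I₁})
    (hS₂ : S₂ = {w | StrictMono w ∧ ∀ i, w i ∈ I₂})
    (μ : Measure ((Fin n → ℝ) × (Fin n → ℝ))) (μ₁ μ₂ : Measure (Fin n → ℝ))
    (hμ : μ = (volume.restrict S).withDensity fun x =>
      ENNReal.ofReal (Real.exp (-twoClusterHam N n y x)
        / ∫ x' in S, Real.exp (-twoClusterHam N n y x')))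
    (hμ₁ : μ₁ = (volume.restrict S₁).withDensity fun w =>
      ENNReal.ofReal (Real.exp (-oneClusterHam N n y z₂ w)
        / ∫ w' in S₁, Real.exp (-oneClusterHam N n y z₂ w')))
    (hμ₂ : μ₂ = (volume.restrict S₂).withDensity fun w =>
      ENNReal.ofReal (Real.exp (-oneClusterHam N n y z₁ w)
        / ∫ w' in S₂, Real.exp (-oneClusterHam N n y z₁ w'))) :
    ∀ A : Set ((Fin n → ℝ) × (Fin n → ℝ)), MeasurableSet A →
      |(μ A).toReal - ((μ₁.prod μ₂) A).toReal|
        ≤ Real.exp (12 * n ^ 2 * ℓ / d) - 1 := by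
  intro A hA
  have hN : N ≠ 0 := by omega
  have hl₁ : ∀ s ∈ I₁, ∀ t ∈ I₁, |s - t| ≤ ℓ := by
    subst hI₁
    intro s hs t ht
    rw [abs_le]; constructor <;> linarith [hs.1, hs.2, ht.1, ht.2]
  have hl₂ : ∀ s ∈ I₂, ∀ t ∈ I₂, |s - t| ≤ ℓ := by
    subst hI₂
    intro s hs t ht
    rw [abs_le]; constructor <;> linarith [hs.1, hs.2, ht.1, ht.2]
  have hℓ : 0 ≤ ℓ := le_trans (by
    have := hy.monotone (show (⟨L₁, Nat.lt_of_succ_lt hL₁⟩ : Fin (N - 2 * n)) ≤ ⟨L₁ + 1, hL₁⟩ by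
      simp [Fin.le_def])
    linarith) hlen₁
  have hmS₁ : MeasurableSet S₁ := by rw [hS₁, hI₁]; exact meas_cone _ _ _
  have hmS₂ : MeasurableSet S₂ := by rw [hS₂, hI₂]; exact meas_cone _ _ _
  have hSp : S = S₁ ×ˢ S₂ := by
    rw [hS, hS₁, hS₂]; ext x; simp
  have hmS : MeasurableSet S := hSp ▸ hmS₁.prod hmS₂
  set K := Real.exp (12 * n ^ 2 * ℓ / d) with hKdef
  have hK : 1 ≤ K := Real.one_le_exp (by positivity)
  set f : (Fin n → ℝ) × (Fin n → ℝ) → ℝ := fun x => Real.exp (-twoClusterHam N n y x) with hf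
  set g : (Fin n → ℝ) × (Fin n → ℝ) → ℝ := fun x =>
    Real.exp (-oneClusterHam N n y z₂ x.1) * Real.exp (-oneClusterHam N n y z₁ x.2) with hg
  have hfm : Measurable f := (meas_two N n y).neg.exp
  have hm1 := meas_one N n y z₂
  have hm2 := meas_one N n y z₁
  have hgm : Measurable g := by
    rw [hg]; fun_prop
  have hf0 : ∀ x, 0 < f x := fun x => Real.exp_pos _
  have hg0 : ∀ x, 0 < g x := fun x => mul_pos (Real.exp_pos _) (Real.exp_pos _)
  have hz : (z₁, z₂) ∈ S := by rw [hS]; exact ⟨hz₁, hz₂⟩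
  have hcmp : ∀ x ∈ S, ∀ x' ∈ S, f x * g x' ≤ K * (f x' * g x) := by
    intro x hx x' hx'
    rw [hS] at hx hx'
    have := couplingR_osc n d ℓ hd I₁ I₂ hl₁ hl₂ hdist (z₁, z₂) x x' hz₁.2 hz₂.2
      hx.1.2 hx.2.2 hx'.1.2 hx'.2.2
    simp only [hf, hg, hKdef, ← Real.exp_add]
    rw [Real.exp_le_exp, ham_split N n hN y z₁ z₂ x, ham_split N n hN y z₁ z₂ x']
    linarith
  have hcmp' : ∀ x ∈ S, ∀ x' ∈ S, g x * f x' ≤ K * (g x' * f x) := by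
    intro x hx x' hx'
    have := hcmp x' hx' x hx
    linarith
  have c1 := gibbs_compare volume S hmS f g hfm hgm hf0 hg0 K (by linarith) _ hz hcmp
  have c2 := gibbs_compare volume S hmS g f hgm hfm hg0 hf0 K (by linarith) _ hz hcmp'
  have hZ : ∫ x' in S, g x' = (∫ w' in S₁, Real.exp (-oneClusterHam N n y z₂ w'))
      * ∫ w' in S₂, Real.exp (-oneClusterHam N n y z₁ w') := by
    rw [hSp, Measure.volume_eq_prod, ← Measure.prod_restrict]
    exact integral_prod_mul (fun w => Real.exp (-oneClusterHam N n y z₂ w))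
      (fun w => Real.exp (-oneClusterHam N n y z₁ w))
  have hQ : μ₁.prod μ₂ = (volume.restrict S).withDensity
      fun x => ENNReal.ofReal (g x / ∫ x' in S, g x') := by
    rw [hμ₁, hμ₂, prod_withDensity (by fun_prop) (by fun_prop), Measure.prod_restrict,
      ← Measure.volume_eq_prod, ← hSp, hZ]
    congr 1
    ext x
    rw [← ENNReal.ofReal_mul
      (div_nonneg (Real.exp_pos _).le (integral_nonneg fun x => (Real.exp_pos _).le)),
      div_mul_div_comm]
  rw [hQ]
  have hP : μ = (volume.restrict S).withDensity
      fun x => ENNReal.ofReal (f x / ∫ x' in S, f x') := hμ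
  rw [hP]
  have gen : ∀ p q : (Fin n → ℝ) × (Fin n → ℝ) → ℝ, Measurable q → (∀ x ∈ S, p x ≤ K * q x) →
      ((volume.restrict S).withDensity fun x => ENNReal.ofReal (p x)) A ≤
      ENNReal.ofReal K * ((volume.restrict S).withDensity fun x => ENNReal.ofReal (q x)) A := by
    intro p q hq h
    rw [withDensity_apply _ hA, withDensity_apply _ hA, ← lintegral_const_mul _ (by fun_prop)]
    refine lintegral_mono_ae (ae_restrict_of_ae ?_)
    filter_upwards [ae_restrict_mem hmS] with a ha
    rw [← ENNReal.ofReal_mul (by linarith)]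
    exact ENNReal.ofReal_le_ofReal (h a ha)
  exact real_diff_bound _ _ (gibbs_mass _ f hf0) (gibbs_mass _ g hg0) K hK A
    (gen _ _ (by fun_prop) c1) (gen _ _ (by fun_prop) c2)
end
end

section
/- (Bakry–Émery logarithmic Sobolev inequality under strong convexity.) Let m ∈ ℕ, K > 0, and let H : ℝ^m → ℝ be twice continuously differentiable with ⟨v, D²H(x) v⟩ ≥ K‖v‖² for all x, v ∈ ℝ^m, and with ∫_{ℝ^m} e^{−H(x)} dx < ∞. Let μ be the probability measure on ℝ^m with density e^{−H}/∫e^{−H} with respect to Lebesgue measure. Then for every smooth compactly supported f : ℝ^m → ℝ with ∫ f² dμ = 1, one has ∫ f² log(f²) dμ ≤ (2/K) ∫ ‖∇f‖² dμ. -/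
open MeasureTheory

noncomputable section

open scoped Pointwise in
lemma BE_vol_image (t c : ℝ) (ht : 0 < t) (A : Set ℝ) :
    volume ((fun x => t * x + c) '' A) = ENNReal.ofReal t * volume A := by
  have h1 : (fun x => t * x + c) '' A = (fun y => y + c) '' (t • A) := by
    rw [← Set.image_smul, Set.image_image]; rfl
  rw [h1, Set.image_add_right, measure_preimage_add_right, Measure.addHaar_smul]
  simp [abs_of_pos ht]

lemma BE_bm_compact (t s : ℝ) (ht : 0 < t) (hs : 0 < s) (A B C : Set ℝ)
    (hA : IsCompact A) (hB : IsCompact B) (nA : A.Nonempty) (nB : B.Nonempty)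
    (h : ∀ a ∈ A, ∀ b ∈ B, t * a + s * b ∈ C) :
    ENNReal.ofReal t * volume A + ENNReal.ofReal s * volume B ≤ volume C := by
  obtain ⟨a0, ha0, ha⟩ := hA.exists_isGreatest nA
  obtain ⟨b0, hb0, hb⟩ := hB.exists_isLeast nB
  have e1 := BE_vol_image t (s * b0) ht A
  have e2 := BE_vol_image s (t * a0) hs B
  rw [← e1, ← e2, ← measure_union₀]
  · apply measure_mono
    rintro _ (⟨x, hx, rfl⟩ | ⟨x, hx, rfl⟩)
    · exact h x hx b0 hb0
    · show s * x + t * a0 ∈ C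
      rw [add_comm]; exact h a0 ha0 x hx
  · exact (hB.image (by fun_prop)).measurableSet.nullMeasurableSet
  · refine measure_mono_null (t := {t * a0 + s * b0}) ?_ (by simp)
    rintro _ ⟨⟨x, hx, rfl⟩, ⟨y, hy, hxy⟩⟩
    simp only [Set.mem_singleton_iff] at *
    have := mul_le_mul_of_nonneg_left (ha hx) ht.le
    have := mul_le_mul_of_nonneg_left (hb hy) hs.le
    linarith

lemma BE_bm (t s : ℝ) (ht : 0 < t) (hs : 0 < s) (A B C : Set ℝ)
    (hA : MeasurableSet A) (hB : MeasurableSet B) (nA : A.Nonempty) (nB : B.Nonempty)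
    (h : ∀ a ∈ A, ∀ b ∈ B, t * a + s * b ∈ C) :
    ENNReal.ofReal t * volume A + ENNReal.ofReal s * volume B ≤ volume C := by
  rw [hA.measure_eq_iSup_isCompact, hB.measure_eq_iSup_isCompact]
  simp only [iSup_and', ENNReal.mul_iSup]
  obtain ⟨a, ha⟩ := nA
  obtain ⟨b, hb⟩ := nB
  refine ENNReal.biSup_add_biSup_le' ⟨∅, by simp⟩ ⟨∅, by simp⟩ ?_
  rintro K ⟨hK, cK⟩ L ⟨hL, cL⟩
  refine le_trans ?_ (BE_bm_compact t s ht hs (insert a K) (insert b L) C (cK.insert a)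
    (cL.insert b) ⟨a, by simp⟩ ⟨b, by simp⟩ ?_)
  · gcongr <;> simp
  · intro x hx y hy
    exact h x (Set.insert_subset ha hK hx) y (Set.insert_subset hb hL hy)

lemma BE_pl_norm (t s : ℝ) (ht : 0 < t) (hs : 0 < s) (hts : t + s = 1) (u v w : ℝ → ENNReal)
    (hu : Measurable u) (hv : Measurable v) (hw : Measurable w)
    (u1 : ⨆ x, u x = 1) (v1 : ⨆ x, v x = 1)
    (h : ∀ x y, u x ^ t * v y ^ s ≤ w (t * x + s * y)) :
    ENNReal.ofReal t * (∫⁻ x, u x) + ENNReal.ofReal s * (∫⁻ x, v x) ≤ ∫⁻ x, w x := by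
  have ule : ∀ x, u x ≤ 1 := fun x => u1 ▸ le_iSup u x
  have vle : ∀ x, v x ≤ 1 := fun x => v1 ▸ le_iSup v x
  have key : ∀ (g : ℝ → ENNReal), Measurable g → (∀ x, g x ≤ 1) →
      ∫⁻ x, g x = ∫⁻ r in Set.Ioi (0:ℝ), volume {a | ENNReal.ofReal r < g a} := by
    intro g hg g1
    have hfin : ∀ x, g x ≠ ⊤ := fun x => ne_top_of_le_ne_top ENNReal.one_ne_top (g1 x)
    have := lintegral_eq_lintegral_meas_lt (f := fun x => (g x).toReal) volume
      (Filter.Eventually.of_forall fun x => ENNReal.toReal_nonneg) hg.ennreal_toReal.aemeasurable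
    simp only [ENNReal.ofReal_toReal (hfin _)] at this
    rw [this]
    refine setLIntegral_congr_fun measurableSet_Ioi ?_
    intro r hr
    simp only
    congr 1
    ext a
    exact (ENNReal.ofReal_lt_iff_lt_toReal (le_of_lt hr) (hfin a)).symm
  have hw' : ∫⁻ x, min (w x) 1 ≤ ∫⁻ x, w x := lintegral_mono fun x => min_le_left _ _
  refine le_trans ?_ hw'
  rw [key u hu ule, key v hv vle, key (fun x => min (w x) 1) (hw.min measurable_const)
    (fun x => min_le_right _ _)]
  have hanti : ∀ (g : ℝ → ENNReal), Measurable fun r : ℝ => volume {a | ENNReal.ofReal r < g a} := by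
    intro g
    apply Antitone.measurable
    intro r r' hr
    apply measure_mono
    intro a ha
    exact lt_of_le_of_lt (ENNReal.ofReal_le_ofReal hr) ha
  rw [← lintegral_const_mul _ (hanti u), ← lintegral_const_mul _ (hanti v),
    ← lintegral_add_left ((hanti u).const_mul _)]
  refine setLIntegral_mono' measurableSet_Ioi ?_
  intro r hr
  by_cases hr1 : ENNReal.ofReal r < 1
  · apply BE_bm t s ht hs
    · exact measurableSet_lt measurable_const hu
    · exact measurableSet_lt measurable_const hv
    · exact lt_iSup_iff.1 (u1 ▸ hr1)
    · exact lt_iSup_iff.1 (v1 ▸ hr1)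
    · intro a ha b hb
      simp only [Set.mem_ofPred_eq] at *
      refine lt_min (lt_of_lt_of_le ?_ (h a b)) hr1
      calc ENNReal.ofReal r = ENNReal.ofReal r ^ t * ENNReal.ofReal r ^ s := by
            rw [← ENNReal.rpow_add_of_nonneg _ _ ht.le hs.le, hts, ENNReal.rpow_one]
        _ < _ := ENNReal.mul_lt_mul (ENNReal.rpow_lt_rpow ha ht) (ENNReal.rpow_lt_rpow hb hs)
  · have e1 : {a | ENNReal.ofReal r < u a} = ∅ := by
      ext a; simp; exact (ule a).trans (not_lt.1 hr1)
    have e2 : {a | ENNReal.ofReal r < v a} = ∅ := by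
      ext a; simp; exact (vle a).trans (not_lt.1 hr1)
    simp [e1, e2]

lemma BE_amgm (t s : ℝ) (ht : 0 < t) (hs : 0 < s) (hts : t + s = 1) (a b : ENNReal) :
    a ^ t * b ^ s ≤ ENNReal.ofReal t * a + ENNReal.ofReal s * b := by
  have hc : (t⁻¹).HolderConjugate s⁻¹ := by
    rw [Real.holderConjugate_iff]
    refine ⟨(one_lt_inv₀ ht).2 (by linarith), by simpa using hts⟩
  have := ENNReal.young_inequality (a ^ t) (b ^ s) hc
  rw [← ENNReal.rpow_mul, ← ENNReal.rpow_mul, mul_inv_cancel₀ ht.ne', mul_inv_cancel₀ hs.ne',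
    ENNReal.rpow_one, ENNReal.rpow_one, ENNReal.ofReal_inv_of_pos ht, ENNReal.ofReal_inv_of_pos hs,
    div_eq_mul_inv, div_eq_mul_inv, inv_inv, inv_inv] at this
  rwa [mul_comm _ a, mul_comm _ b]

lemma BE_pl_bdd (t s : ℝ) (ht : 0 < t) (hs : 0 < s) (hts : t + s = 1) (u v w : ℝ → ENNReal)
    (hu : Measurable u) (hv : Measurable v) (hw : Measurable w)
    (u1 : ⨆ x, u x ≠ ⊤) (v1 : ⨆ x, v x ≠ ⊤)
    (h : ∀ x y, u x ^ t * v y ^ s ≤ w (t * x + s * y)) :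
    (∫⁻ x, u x) ^ t * (∫⁻ x, v x) ^ s ≤ ∫⁻ x, w x := by
  set M := ⨆ x, u x with hM
  set N := ⨆ x, v x with hN
  by_cases hM0 : M = 0
  · have : ∀ x, u x = 0 := fun x => by simpa using (hM0 ▸ le_iSup u x : u x ≤ 0)
    simp [this, ht]
  by_cases hN0 : N = 0
  · have : ∀ x, v x = 0 := fun x => by simpa using (hN0 ▸ le_iSup v x : v x ≤ 0)
    simp [this, hs]
  have hMt0 : M ^ t ≠ 0 := by simp [hM0, u1]
  have hMt1 : M ^ t ≠ ⊤ := by simp [hM0, u1]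
  have hNt0 : N ^ s ≠ 0 := by simp [hN0, v1]
  have hNt1 : N ^ s ≠ ⊤ := by simp [hN0, v1]
  have hP0 : M ^ t * N ^ s ≠ 0 := mul_ne_zero hMt0 hNt0
  have hP1 : M ^ t * N ^ s ≠ ⊤ := ENNReal.mul_ne_top hMt1 hNt1
  have main := BE_pl_norm t s ht hs hts (fun x => M⁻¹ * u x) (fun x => N⁻¹ * v x)
    (fun x => (M ^ t * N ^ s)⁻¹ * w x) (hu.const_mul _) (hv.const_mul _) (hw.const_mul _)
    (by rw [← ENNReal.mul_iSup, ← hM, ENNReal.inv_mul_cancel hM0 u1])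
    (by rw [← ENNReal.mul_iSup, ← hN, ENNReal.inv_mul_cancel hN0 v1])
    (by
      intro x y
      rw [ENNReal.mul_rpow_of_nonneg _ _ ht.le, ENNReal.mul_rpow_of_nonneg _ _ hs.le,
        mul_mul_mul_comm, ENNReal.inv_rpow, ENNReal.inv_rpow,
        ENNReal.mul_inv (Or.inl hMt0) (Or.inl hMt1)]
      gcongr
      exact h x y)
  have main2 := (BE_amgm t s ht hs hts _ _).trans main
  rw [lintegral_const_mul _ hu, lintegral_const_mul _ hv, lintegral_const_mul _ hw,
    ENNReal.mul_rpow_of_nonneg _ _ ht.le, ENNReal.mul_rpow_of_nonneg _ _ hs.le,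
        mul_mul_mul_comm, ENNReal.inv_rpow, ENNReal.inv_rpow,
        ← ENNReal.mul_inv (Or.inl hMt0) (Or.inl hMt1)] at main2
  exact (ENNReal.mul_le_mul_iff_right (ENNReal.inv_ne_zero.2 hP1) (ENNReal.inv_ne_top.2 hP0)).1 main2

lemma BE_pl_one (t s : ℝ) (ht : 0 < t) (hs : 0 < s) (hts : t + s = 1) (u v w : ℝ → ENNReal)
    (hu : Measurable u) (hv : Measurable v) (hw : Measurable w)
    (h : ∀ x y, u x ^ t * v y ^ s ≤ w (t * x + s * y)) :
    (∫⁻ x, u x) ^ t * (∫⁻ x, v x) ^ s ≤ ∫⁻ x, w x := by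
  by_cases hU : ∫⁻ x, u x = 0
  · simp [hU, ht]
  by_cases hV : ∫⁻ x, v x = 0
  · simp [hV, hs]
  have trunc : ∀ g : ℝ → ENNReal, Measurable g →
      Filter.Tendsto (fun n : ℕ => ∫⁻ x, min (g x) n) Filter.atTop (nhds (∫⁻ x, g x)) := by
    intro g hg
    apply lintegral_tendsto_of_tendsto_of_monotone
    · intro n; exact (hg.min measurable_const).aemeasurable
    · refine Filter.Eventually.of_forall fun x => ?_
      intro n m hnm
      exact min_le_min_left _ (by exact_mod_cast hnm)
    · refine Filter.Eventually.of_forall fun x => ?_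
      have := (tendsto_const_nhds (x := g x)).min ENNReal.tendsto_nat_nhds_top
      simpa using this
  have hlim := ENNReal.Tendsto.mul ((trunc u hu).ennrpow_const t) (Or.inl (by simp [hU, ht, not_lt.2 ht.le]))
    ((trunc v hv).ennrpow_const s) (Or.inl (by simp [hV, hs, not_lt.2 hs.le]))
  refine le_of_tendsto' hlim fun n => ?_
  apply BE_pl_bdd t s ht hs hts _ _ w (hu.min measurable_const) (hv.min measurable_const) hw
  · exact ne_top_of_le_ne_top (ENNReal.natCast_ne_top n) (iSup_le fun x => min_le_right _ _)
  · exact ne_top_of_le_ne_top (ENNReal.natCast_ne_top n) (iSup_le fun x => min_le_right _ _)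
  · intro x y
    refine le_trans ?_ (h x y)
    gcongr <;> exact min_le_left _ _

lemma BE_pl_pi (t s : ℝ) (ht : 0 < t) (hs : 0 < s) (hts : t + s = 1) (n : ℕ) :
    ∀ (u v w : (Fin n → ℝ) → ENNReal)
    (_ : Measurable u) (_ : Measurable v) (_ : Measurable w)
    (_ : ∀ x y, u x ^ t * v y ^ s ≤ w (t • x + s • y)),
    (∫⁻ x, u x) ^ t * (∫⁻ x, v x) ^ s ≤ ∫⁻ x, w x := by
  induction n with
  | zero =>
    intro u v w hu hv hw h
    have key : ∀ g : (Fin 0 → ℝ) → ENNReal, ∫⁻ x, g x = g 0 := by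
      intro g
      rw [volume_pi, Measure.pi_of_empty, lintegral_dirac]
      congr 1; exact Subsingleton.elim _ _
    rw [key, key, key]
    simpa using h 0 0
  | succ n ih =>
    intro u v w hu hv hw h
    have mp := (volume_preserving_piFinSuccAbove (fun _ : Fin (n+1) => ℝ) 0).symm
    have mcons : Measurable fun p : ℝ × (Fin n → ℝ) => (Fin.cons p.1 p.2 : Fin (n+1) → ℝ) := by
      have := (MeasurableEquiv.piFinSuccAbove (fun _ : Fin (n+1) => ℝ) 0).symm.measurable
      convert this using 1
      ext p i
      simp
    have key : ∀ g : (Fin (n+1) → ℝ) → ENNReal, Measurable g →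
        ∫⁻ x, g x = ∫⁻ a : ℝ, ∫⁻ x : Fin n → ℝ, g (Fin.cons a x) := by
      intro g hg
      rw [← mp.lintegral_comp hg, Measure.volume_eq_prod, lintegral_prod]
      · simp
        rfl
      · exact (hg.comp (MeasurableEquiv.measurable _)).aemeasurable
    rw [key u hu, key v hv, key w hw]
    apply BE_pl_one t s ht hs hts
    · exact (hu.comp mcons).lintegral_prod_right'
    · exact (hv.comp mcons).lintegral_prod_right'
    · exact (hw.comp mcons).lintegral_prod_right'
    · intro a b
      apply ih
      · exact (hu.comp mcons).comp measurable_prodMk_left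
      · exact (hv.comp mcons).comp measurable_prodMk_left
      · exact (hw.comp mcons).comp measurable_prodMk_left
      · intro x y
        refine (h _ _).trans (le_of_eq ?_)
        congr 1
        ext i
        refine Fin.cases ?_ (fun i => ?_) i <;> simp

lemma BE_pl (t s : ℝ) (ht : 0 < t) (hs : 0 < s) (hts : t + s = 1) (n : ℕ)
    (u v w : EuclideanSpace ℝ (Fin n) → ENNReal)
    (hu : Measurable u) (hv : Measurable v) (hw : Measurable w)
    (h : ∀ x y, u x ^ t * v y ^ s ≤ w (t • x + s • y)) :
    (∫⁻ x, u x) ^ t * (∫⁻ x, v x) ^ s ≤ ∫⁻ x, w x := by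
  have mp := (EuclideanSpace.volume_preserving_symm_measurableEquiv_toLp (Fin n)).symm
  rw [← mp.lintegral_comp hu, ← mp.lintegral_comp hv, ← mp.lintegral_comp hw]
  apply BE_pl_pi t s ht hs hts n
  · exact hu.comp (MeasurableEquiv.measurable _)
  · exact hv.comp (MeasurableEquiv.measurable _)
  · exact hw.comp (MeasurableEquiv.measurable _)
  · intro x y
    exact (h _ _)

lemma BE_strong_convex {E : Type*} [NormedAddCommGroup E] [InnerProductSpace ℝ E]
    (K : ℝ) (H : E → ℝ) (hH : ContDiff ℝ 2 H)
    (hconv : ∀ x v : E, K * ‖v‖ ^ 2 ≤ fderiv ℝ (fderiv ℝ H) x v v)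
    (t s : ℝ) (ht : 0 < t) (hs : 0 < s) (hts : t + s = 1) (x y : E) :
    H (t • x + s • y) + K * (t * s) / 2 * ‖y - x‖ ^ 2 ≤ t * H x + s * H y := by
  set v := y - x with hv
  let φ : ℝ → ℝ := fun r => H (x + r • v) - K / 2 * ‖v‖ ^ 2 * r ^ 2
  have hline : ∀ r : ℝ, HasDerivAt (fun r : ℝ => x + r • v) v r := by
    intro r
    simpa using ((hasDerivAt_id r).smul_const v).const_add x
  have hH1 : Differentiable ℝ H := hH.differentiable (by norm_num)
  have hH2 : Differentiable ℝ (fderiv ℝ H) :=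
    (hH.fderiv_right (m := 1) (by norm_num)).differentiable (by norm_num)
  have d1 : ∀ r, HasDerivAt φ (fderiv ℝ H (x + r • v) v - K * ‖v‖ ^ 2 * r) r := by
    intro r
    have a := (hH1 (x + r • v)).hasFDerivAt.comp_hasDerivAt r (hline r)
    have b := ((hasDerivAt_id r).pow 2).const_mul (K / 2 * ‖v‖ ^ 2)
    have c := a.sub b
    have e : fderiv ℝ H (x + r • v) v - K * ‖v‖ ^ 2 * r = fderiv ℝ H (x + r • v) v -
        K / 2 * ‖v‖ ^ 2 * (((2 : ℕ) : ℝ) * id r ^ (2 - 1) * 1) := by simp; ring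
    rw [e]
    exact c
  have d2 : ∀ r, HasDerivAt (fun r => fderiv ℝ H (x + r • v) v - K * ‖v‖ ^ 2 * r)
      (fderiv ℝ (fderiv ℝ H) (x + r • v) v v - K * ‖v‖ ^ 2) r := by
    intro r
    have a := (hH2 (x + r • v)).hasFDerivAt.comp_hasDerivAt r (hline r)
    have a' := a.clm_apply (hasDerivAt_const r v)
    have b := (hasDerivAt_id r).const_mul (K * ‖v‖ ^ 2)
    have c := a'.sub b
    have e : fderiv ℝ (fderiv ℝ H) (x + r • v) v v - K * ‖v‖ ^ 2 =
        (fderiv ℝ (fderiv ℝ H) (x + r • v) v v + fderiv ℝ H (x + r • v) 0) -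
        K * ‖v‖ ^ 2 * 1 := by simp
    rw [e]
    exact c
  have e1 : deriv φ = fun r => fderiv ℝ H (x + r • v) v - K * ‖v‖ ^ 2 * r :=
    funext fun r => (d1 r).deriv
  have hc : ConvexOn ℝ Set.univ φ := by
    apply convexOn_of_deriv2_nonneg convex_univ
    · exact fun r _ => (d1 r).continuousAt.continuousWithinAt
    · exact fun r _ => (d1 r).differentiableAt.differentiableWithinAt
    · rw [e1]; exact fun r _ => (d2 r).differentiableAt.differentiableWithinAt
    · intro r _
      simp only [Function.iterate_succ, Function.iterate_zero, Function.comp, id]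
      rw [e1, (d2 r).deriv]
      linarith [hconv (x + r • v) v]
  have := hc.2 (Set.mem_univ 0) (Set.mem_univ 1) ht.le hs.le hts
  have hx : x + s • v = t • x + s • y := by
    rw [hv, smul_sub, show t = 1 - s by linarith, sub_smul, one_smul]; abel
  simp only [φ, smul_eq_mul, mul_zero, mul_one, zero_add, zero_smul, add_zero, one_smul, hx] at this
  have hxy : x + v = y := by rw [hv]; abel
  rw [hxy] at this
  have ht' : t = 1 - s := by linarith
  subst ht'
  nlinarith

lemma BE_taylor {E : Type*} [NormedAddCommGroup E] [InnerProductSpace ℝ E]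
    (g : E → ℝ) (hg : ContDiff ℝ 2 g) (hs : HasCompactSupport (fderiv ℝ g)) :
    ∃ L : ℝ, 0 ≤ L ∧ ∀ x z, g x ≤ g z + ‖fderiv ℝ g z‖ * ‖x - z‖ + L * ‖x - z‖ ^ 2 := by
  obtain ⟨C, hC⟩ := ContDiff.lipschitzWith_of_hasCompactSupport hs
    (hg.fderiv_right (m := 1) (by norm_num)) (by norm_num)
  refine ⟨C, C.2, fun x z => ?_⟩
  have := Convex.norm_image_sub_le_of_norm_hasFDerivWithin_le' (𝕜 := ℝ) (f := g) (f' := fderiv ℝ g)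
    (φ := fderiv ℝ g z) (C := C * ‖x - z‖) (s := segment ℝ z x) (x := z) (y := x)
    (fun y _ => (hg.differentiable (by norm_num) y).hasFDerivAt.hasFDerivWithinAt)
    (by
      intro y hy
      refine (hC.norm_sub_le y z).trans ?_
      gcongr
      rw [segment_eq_image'] at hy
      obtain ⟨r, hr, rfl⟩ := hy
      simp only [add_sub_cancel_left, norm_smul]
      rw [Real.norm_of_nonneg hr.1]
      exact mul_le_of_le_one_left (norm_nonneg _) hr.2)
    (convex_segment z x) (left_mem_segment ℝ z x) (right_mem_segment ℝ z x)
  have h1 := (le_abs_self _).trans this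
  have h2 := (le_abs_self _).trans ((fderiv ℝ g z).le_opNorm (x - z))
  nlinarith

/-- Prékopa–Leindler consequence. -/
lemma BE_step (m : ℕ) (K : ℝ)
    (H g : EuclideanSpace ℝ (Fin m) → ℝ) (hH : ContDiff ℝ 2 H) (hg : ContDiff ℝ 2 g)
    (hconv : ∀ x v : EuclideanSpace ℝ (Fin m), K * ‖v‖ ^ 2 ≤ fderiv ℝ (fderiv ℝ H) x v v)
    (hint : Integrable fun x => Real.exp (-H x)) (hone : ∫ x, Real.exp (-H x) = 1)
    (M R : ℝ) (hM : ∀ x, |g x| ≤ M) (hR : ∀ x, ‖fderiv ℝ g x‖ ≤ R)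
    (L : ℝ) (hL : ∀ x z, g x ≤ g z + ‖fderiv ℝ g z‖ * ‖x - z‖ + L * ‖x - z‖ ^ 2)
    (t s δ : ℝ) (ht : 0 < t) (hs : 0 < s) (hts : t + s = 1)
    (hpos : 0 < K * t - 2 * L * s) (hδ : δ = s / (2 * (K * t - 2 * L * s))) :
    (∫ x, Real.exp (g x / t) * Real.exp (-H x)) ^ t ≤
      ∫ x, Real.exp (g x + δ * ‖fderiv ℝ g x‖ ^ 2) * Real.exp (-H x) := by
  have hcg := hg.continuous
  have hcH := hH.continuous
  have hcd : Continuous (fderiv ℝ g) := hg.continuous_fderiv (by norm_num)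
  have hδ0 : 0 ≤ δ := by rw [hδ]; positivity
  have hbd : ∀ (φ : EuclideanSpace ℝ (Fin m) → ℝ), Continuous φ → (∃ C, ∀ x, φ x ≤ C) →
      Integrable fun x => Real.exp (φ x) * Real.exp (-H x) := by
    rintro φ hφ ⟨C, hC⟩
    refine hint.bdd_mul (c := Real.exp C) (by fun_prop) (Filter.Eventually.of_forall fun x => ?_)
    rw [Real.norm_of_nonneg (Real.exp_pos _).le]
    exact Real.exp_le_exp.2 (hC x)
  have iu := hbd (fun x => g x / t) (by fun_prop)
    ⟨M / t, fun x => by gcongr; exact (le_abs_self _).trans (hM x)⟩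
  have iw := hbd (fun x => g x + δ * ‖fderiv ℝ g x‖ ^ 2) (by fun_prop)
    ⟨M + δ * R ^ 2, fun x => by gcongr; exacts [(le_abs_self _).trans (hM x), hR x]⟩
  have pl := BE_pl t s ht hs hts m
    (fun x => ENNReal.ofReal (Real.exp (g x / t) * Real.exp (-H x)))
    (fun x => ENNReal.ofReal (Real.exp (-H x)))
    (fun x => ENNReal.ofReal (Real.exp (g x + δ * ‖fderiv ℝ g x‖ ^ 2) * Real.exp (-H x)))
    (by fun_prop) (by fun_prop) (by fun_prop) ?_
  · rw [← ofReal_integral_eq_lintegral_ofReal iu (Filter.Eventually.of_forall fun x => by positivity),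
      ← ofReal_integral_eq_lintegral_ofReal hint (Filter.Eventually.of_forall fun x => by positivity),
      ← ofReal_integral_eq_lintegral_ofReal iw (Filter.Eventually.of_forall fun x => by positivity),
      hone, ENNReal.ofReal_one, ENNReal.one_rpow, mul_one,
      ENNReal.ofReal_rpow_of_nonneg (integral_nonneg fun x => by positivity) ht.le] at pl
    exact (ENNReal.ofReal_le_ofReal_iff (integral_nonneg fun x => by positivity)).1 pl
  · intro x y
    rw [ENNReal.ofReal_rpow_of_pos (by positivity), ENNReal.ofReal_rpow_of_pos (by positivity),
      ← ENNReal.ofReal_mul (by positivity)]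
    apply ENNReal.ofReal_le_ofReal
    rw [← Real.exp_add, ← Real.exp_add, ← Real.exp_mul, ← Real.exp_mul, ← Real.exp_add]
    apply Real.exp_le_exp.2
    set z := t • x + s • y with hz
    have h1 := BE_strong_convex K H hH hconv t s ht hs hts x y
    have h2 := hL x z
    have hxz : ‖x - z‖ = s * ‖y - x‖ := by
      have : x - z = s • (x - y) := by
        rw [hz, smul_sub, show t = 1 - s by linarith, sub_smul, one_smul]; abel
      rw [this, norm_smul, Real.norm_of_nonneg hs.le, norm_sub_rev]
    rw [hxz] at h2
    set G := ‖fderiv ℝ g z‖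
    set ρ := ‖y - x‖
    have h3 : G * (s * ρ) - (K * (t * s) / 2 - L * s ^ 2) * ρ ^ 2 ≤ δ * G ^ 2 := by
      rw [hδ, div_mul_eq_mul_div, le_div_iff₀ (by positivity)]
      have : 0 ≤ s * (G - (K * t - 2 * L * s) * ρ) ^ 2 := by positivity
      nlinarith
    have h4 : (g x / t + -H x) * t = g x - t * H x := by field_simp; ring
    rw [h4]
    nlinarith

lemma BE_lsi (m : ℕ) (K : ℝ) (hK : 0 < K)
    (H g : EuclideanSpace ℝ (Fin m) → ℝ) (hH : ContDiff ℝ 2 H) (hg : ContDiff ℝ 2 g)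
    (hconv : ∀ x v : EuclideanSpace ℝ (Fin m), K * ‖v‖ ^ 2 ≤ fderiv ℝ (fderiv ℝ H) x v v)
    (hint : Integrable fun x => Real.exp (-H x)) (hone : ∫ x, Real.exp (-H x) = 1)
    (hsupp : HasCompactSupport (fderiv ℝ g)) (M : ℝ) (hM : ∀ x, |g x| ≤ M) :
    (∫ x, g x * Real.exp (g x) * Real.exp (-H x)) -
      (∫ x, Real.exp (g x) * Real.exp (-H x)) * Real.log (∫ x, Real.exp (g x) * Real.exp (-H x))
      ≤ 1 / (2 * K) * ∫ x, ‖fderiv ℝ g x‖ ^ 2 * Real.exp (g x) * Real.exp (-H x) := by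
  obtain ⟨L, hL0, hL⟩ := BE_taylor g hg hsupp
  have hcg := hg.continuous
  have hcH := hH.continuous
  have hcd : Continuous (fderiv ℝ g) := hg.continuous_fderiv (by norm_num)
  obtain ⟨R, hR⟩ := hcd.bounded_above_of_compact_support hsupp
  have hbd : ∀ (φ : EuclideanSpace ℝ (Fin m) → ℝ), Continuous φ → (∃ C, ∀ x, |φ x| ≤ C) →
      Integrable fun x => φ x * Real.exp (-H x) := by
    rintro φ hφ ⟨C, hC⟩
    exact hint.bdd_mul (c := C) (by fun_prop) (Filter.Eventually.of_forall hC)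
  have hexp : ∀ c : ℝ, 0 ≤ c → ∀ x, |Real.exp (c * g x)| ≤ Real.exp (c * M) := by
    intro c hc x
    rw [abs_of_pos (Real.exp_pos _)]
    exact Real.exp_le_exp.2 (by gcongr; exact (le_abs_self _).trans (hM x))
  have hexp1 : ∀ x, |Real.exp (g x)| ≤ Real.exp M := by
    intro x; simpa using hexp 1 zero_le_one x
  have iA := hbd (fun x => Real.exp (g x)) (by fun_prop) ⟨_, hexp1⟩
  have iB := hbd (fun x => g x * Real.exp (g x)) (by fun_prop)
    ⟨M * Real.exp M, fun x => by rw [abs_mul]; gcongr; exacts [(abs_nonneg _).trans (hM x), hM x, hexp1 x]⟩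
  have iD := hbd (fun x => ‖fderiv ℝ g x‖ ^ 2 * Real.exp (g x)) (by fun_prop)
    ⟨R ^ 2 * Real.exp M, fun x => by
      rw [abs_mul, abs_of_nonneg (sq_nonneg ‖fderiv ℝ g x‖)]; gcongr; exacts [hR x, hexp1 x]⟩
  set A := ∫ x, Real.exp (g x) * Real.exp (-H x) with hA
  set B := ∫ x, g x * Real.exp (g x) * Real.exp (-H x) with hB
  set D := ∫ x, ‖fderiv ℝ g x‖ ^ 2 * Real.exp (g x) * Real.exp (-H x) with hD
  have hD0 : 0 ≤ D := integral_nonneg fun x => by positivity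
  have hA0 : 0 < A := by
    rw [hA]
    have : ∫ x, Real.exp (-M) * Real.exp (-H x) ≤ A := by
      apply integral_mono (hint.const_mul _) iA
      intro x
      simp only
      gcongr
      exact (abs_le.1 (hM x)).1
    rw [integral_const_mul, hone, mul_one] at this
    exact (Real.exp_pos _).trans_le this
  let δ : ℝ → ℝ := fun s => s / (2 * (K * (1 - s) - 2 * L * s))
  have key : ∀ s : ℝ, 0 < s → s < 1 → 0 < K * (1 - s) - 2 * L * s →
      B - A * Real.log A ≤ 1 / (2 * (K * (1 - s) - 2 * L * s)) * Real.exp (δ s * R ^ 2) * D := by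
    intro s hs hs1 hpos
    have ht : 0 < 1 - s := by linarith
    have hδ0 : 0 ≤ δ s := by simp only [δ]; positivity
    have step := BE_step m K H g hH hg hconv hint hone M R hM hR L hL (1 - s) s (δ s) ht hs
      (by ring) hpos rfl
    -- upper bound
    have up : ∫ x, Real.exp (g x + δ s * ‖fderiv ℝ g x‖ ^ 2) * Real.exp (-H x) ≤
        A + δ s * Real.exp (δ s * R ^ 2) * D := by
      rw [hA, hD, ← integral_const_mul, ← integral_add iA (iD.const_mul _)]
      apply integral_mono_of_nonneg (Filter.Eventually.of_forall fun x => by positivity)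
        (iA.add (iD.const_mul _))
      refine Filter.Eventually.of_forall fun x => ?_
      simp only [Pi.add_apply]
      set y := δ s * ‖fderiv ℝ g x‖ ^ 2 with hy
      have y0 : 0 ≤ y := by positivity
      have y1 : y ≤ δ s * R ^ 2 := by rw [hy]; gcongr; exact hR x
      have e1 : Real.exp y ≤ 1 + y * Real.exp (δ s * R ^ 2) := by
        have h1 : Real.exp y ≤ 1 + y * Real.exp y := by
          have := Real.add_one_le_exp (-y)
          have h2 : Real.exp (-y) * Real.exp y = 1 := by rw [← Real.exp_add]; simp
          nlinarith [Real.exp_pos y]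
        have : y * Real.exp y ≤ y * Real.exp (δ s * R ^ 2) := by gcongr
        linarith
      rw [Real.exp_add]
      have : Real.exp (g x) * Real.exp y * Real.exp (-H x) ≤
        Real.exp (g x) * (1 + y * Real.exp (δ s * R ^ 2)) * Real.exp (-H x) := by gcongr
      refine this.trans (le_of_eq ?_)
      rw [hy]; ring
    -- lower bound
    set c := s / (1 - s) * (B / A) with hc
    have low1 : Real.exp c * A ≤ ∫ x, Real.exp (g x / (1 - s)) * Real.exp (-H x) := by
      have iU := hbd (fun x => Real.exp (g x / (1 - s))) (by fun_prop)
        ⟨Real.exp ((1 - s)⁻¹ * M), fun x => by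
          have := hexp (1 - s)⁻¹ (by positivity) x
          rwa [inv_mul_eq_div] at this⟩
      have e : Real.exp c * A = ∫ x, (Real.exp c * (1 - c)) * (Real.exp (g x) * Real.exp (-H x)) +
          (Real.exp c * (s / (1 - s))) * (g x * Real.exp (g x) * Real.exp (-H x)) := by
        rw [integral_add (iA.const_mul _) (iB.const_mul _), integral_const_mul, integral_const_mul,
          ← hA, ← hB]
        have : s / (1 - s) * B = c * A := by rw [hc]; field_simp
        linear_combination (-Real.exp c) * this
      rw [e]
      apply integral_mono ((iA.const_mul _).add (iB.const_mul _)) iU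
      intro x
      simp only [Pi.add_apply]
      have e2 : g x / (1 - s) = g x + (c + (s / (1 - s) * g x - c)) := by
        have := ht.ne'; field_simp; ring
      rw [e2, Real.exp_add, Real.exp_add]
      have := Real.add_one_le_exp (s / (1 - s) * g x - c)
      calc _ = Real.exp (g x) * (Real.exp c * (s / (1 - s) * g x - c + 1)) * Real.exp (-H x) := by ring
        _ ≤ _ := by gcongr
    have low2 : A + s * (B - A * Real.log A) ≤ (Real.exp c * A) ^ (1 - s) := by
      have : (Real.exp c * A) ^ (1 - s) = A * Real.exp (s * (B / A - Real.log A)) := by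
        rw [Real.rpow_def_of_pos (by positivity), Real.log_mul (Real.exp_pos _).ne' hA0.ne',
          Real.log_exp]
        nth_rewrite 2 [← Real.exp_log hA0]
        rw [← Real.exp_add]
        congr 1
        rw [hc]
        have := ht.ne'
        field_simp
        ring
      rw [this]
      have h2 := Real.add_one_le_exp (s * (B / A - Real.log A))
      calc _ = A * (s * (B / A - Real.log A) + 1) := by field_simp; ring
        _ ≤ _ := by gcongr
    have low3 := Real.rpow_le_rpow (by positivity) low1 ht.le
    have all : s * (B - A * Real.log A) ≤ δ s * Real.exp (δ s * R ^ 2) * D := by linarith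
    refine le_of_mul_le_mul_left (all.trans (le_of_eq ?_)) hs
    have : δ s = s * (1 / (2 * (K * (1 - s) - 2 * L * s))) := by simp only [δ]; ring
    nth_rewrite 1 [this]
    ring
  have c0 : ContinuousAt (fun s : ℝ => K * (1 - s) - 2 * L * s) 0 := by fun_prop
  have hlim : ContinuousAt (fun s : ℝ =>
      1 / (2 * (K * (1 - s) - 2 * L * s)) * Real.exp (δ s * R ^ 2) * D) 0 := by
    have : (2 * (K * (1 - (0:ℝ)) - 2 * L * 0)) ≠ 0 := by simp [hK.ne']
    simp only [δ]
    fun_prop (disch := assumption)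
  have hev : ∀ᶠ s : ℝ in nhdsWithin 0 (Set.Ioi 0), B - A * Real.log A ≤
      1 / (2 * (K * (1 - s) - 2 * L * s)) * Real.exp (δ s * R ^ 2) * D := by
    have e1 : ∀ᶠ s : ℝ in nhdsWithin 0 (Set.Ioi 0), 0 < K * (1 - s) - 2 * L * s :=
      (c0.eventually (lt_mem_nhds (by simpa using hK))).filter_mono nhdsWithin_le_nhds
    have e2 : ∀ᶠ s : ℝ in nhdsWithin 0 (Set.Ioi 0), s < 1 :=
      (gt_mem_nhds one_pos).filter_mono nhdsWithin_le_nhds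
    filter_upwards [e1, e2, self_mem_nhdsWithin] with s h1 h2 h3
    exact key s h3 h2 h1
  have := ge_of_tendsto (hlim.tendsto.mono_left nhdsWithin_le_nhds) hev
  simpa [δ] using this

lemma BE_core (m : ℕ) (K : ℝ) (hK : 0 < K)
    (H : EuclideanSpace ℝ (Fin m) → ℝ) (hH : ContDiff ℝ 2 H)
    (hconv : ∀ x v : EuclideanSpace ℝ (Fin m), K * ‖v‖ ^ 2 ≤ fderiv ℝ (fderiv ℝ H) x v v)
    (hint : Integrable fun x => Real.exp (-H x)) (hone : ∫ x, Real.exp (-H x) = 1)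
    (f : EuclideanSpace ℝ (Fin m) → ℝ)
    (hf : ContDiff ℝ (⊤ : ℕ∞) f) (hfsupp : HasCompactSupport f)
    (hfnorm : ∫ x, f x ^ 2 * Real.exp (-H x) = 1) :
    ∫ x, f x ^ 2 * Real.log (f x ^ 2) * Real.exp (-H x) ≤
      (2 / K) * ∫ x, ‖fderiv ℝ f x‖ ^ 2 * Real.exp (-H x) := by
  have hcf := hf.continuous
  have hcH := hH.continuous
  have hf1 : Differentiable ℝ f := hf.differentiable (by simp)
  have hcd : Continuous (fderiv ℝ f) := hf.continuous_fderiv (by simp)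
  obtain ⟨F, hF⟩ := hcf.bounded_above_of_compact_support hfsupp
  obtain ⟨R, hR⟩ := hcd.bounded_above_of_compact_support (hfsupp.fderiv (𝕜 := ℝ))
  have hbd : ∀ (φ : EuclideanSpace ℝ (Fin m) → ℝ), Continuous φ → (∃ C, ∀ x, |φ x| ≤ C) →
      Integrable fun x => φ x * Real.exp (-H x) := by
    rintro φ hφ ⟨C, hC⟩
    exact hint.bdd_mul (c := C) (by fun_prop) (Filter.Eventually.of_forall hC)
  have iS := hbd (fun x => f x ^ 2) (by fun_prop) ⟨F ^ 2, fun x => by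
    rw [abs_pow]; gcongr; exact hF x⟩
  have iI := hbd (fun x => ‖fderiv ℝ f x‖ ^ 2) (by fun_prop) ⟨R ^ 2, fun x => by
    rw [abs_pow, abs_norm]; gcongr; exact hR x⟩
  have cE : Continuous fun x => f x ^ 2 * Real.log (f x ^ 2) :=
    Real.continuous_mul_log.comp (hcf.pow 2)
  have sE : HasCompactSupport fun x => f x ^ 2 * Real.log (f x ^ 2) := by
    refine hfsupp.mono ?_
    intro x hx hx0
    simp [hx0] at hx
  have iE := hbd _ cE (cE.bounded_above_of_compact_support sE)
  set I := ∫ x, ‖fderiv ℝ f x‖ ^ 2 * Real.exp (-H x) with hI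
  set S := ∫ x, f x ^ 2 * Real.log (f x ^ 2) * Real.exp (-H x) with hS
  have key : ∀ ε : ℝ, 0 < ε → S ≤ 2 / K * I + (1 + ε) * Real.log (1 + ε) - ε * Real.log ε := by
    intro ε hε
    have hpos : ∀ x, 0 < f x ^ 2 + ε := fun x => by positivity
    let g : EuclideanSpace ℝ (Fin m) → ℝ := fun x => Real.log (f x ^ 2 + ε)
    have hgexp : ∀ x, Real.exp (g x) = f x ^ 2 + ε := fun x => Real.exp_log (hpos x)
    have hg : ContDiff ℝ 2 g := by
      have : ContDiff ℝ 2 f := contDiff_infty.1 hf 2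
      exact ((this.pow 2).add contDiff_const).log fun x => (hpos x).ne'
    have hgd : ∀ x, fderiv ℝ g x = (2 * f x / (f x ^ 2 + ε)) • fderiv ℝ f x := by
      intro x
      have h1 := (((hf1 x).hasFDerivAt.pow 2).add_const ε).log (hpos x).ne'
      have := h1.fderiv
      simp only [g]
      rw [this, smul_smul]
      congr 1
      simp; ring
    have hgs : HasCompactSupport (fderiv ℝ g) := by
      refine (hfsupp.fderiv (𝕜 := ℝ)).mono ?_
      intro x hx hx0
      apply hx
      rw [hgd, hx0, smul_zero]
    have hgM : ∃ M, ∀ x, |g x| ≤ M := by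
      refine ⟨max |Real.log (F ^ 2 + ε)| |Real.log ε|, fun x => ?_⟩
      have h1 : g x ≤ Real.log (F ^ 2 + ε) := by
        apply Real.log_le_log (hpos x)
        have : f x ^ 2 ≤ F ^ 2 := by rw [← sq_abs]; gcongr; exact hF x
        linarith
      have h2 : Real.log ε ≤ g x := Real.log_le_log hε (by nlinarith [sq_nonneg (f x)])
      rw [abs_le]
      refine ⟨?_, h1.trans ((le_abs_self _).trans (le_max_left _ _))⟩
      have := neg_abs_le (Real.log ε)
      have := le_max_right |Real.log (F ^ 2 + ε)| |Real.log ε|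
      linarith
    obtain ⟨M, hM⟩ := hgM
    have main := BE_lsi m K hK H g hH hg hconv hint hone hgs M hM
    simp only [hgexp] at main
    have hA : ∫ x, (f x ^ 2 + ε) * Real.exp (-H x) = 1 + ε := by
      simp only [add_mul]
      rw [integral_add iS (hint.const_mul ε), integral_const_mul, hone, hfnorm, mul_one]
    rw [hA] at main
    have hcg := hg.continuous
    have hM0 : 0 ≤ M := (abs_nonneg _).trans (hM 0)
    have iB := hbd (fun x => g x * (f x ^ 2 + ε)) (by fun_prop) ⟨M * (F ^ 2 + ε), fun x => by
      rw [abs_mul, abs_of_pos (hpos x), ← sq_abs]; gcongr; exacts [hM x, hF x]⟩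
    have hB : S + ε * Real.log ε ≤ ∫ x, g x * (f x ^ 2 + ε) * Real.exp (-H x) := by
      have : S + ε * Real.log ε = ∫ x, (f x ^ 2 * Real.log (f x ^ 2) * Real.exp (-H x) +
          ε * Real.log ε * Real.exp (-H x)) := by
        rw [integral_add iE (hint.const_mul _), integral_const_mul, hone, mul_one]
      rw [this]
      apply integral_mono (iE.add (hint.const_mul _)) iB
      intro x
      simp only [Pi.add_apply]
      rw [← add_mul]
      gcongr
      have h2 : Real.log ε ≤ g x := Real.log_le_log hε (by nlinarith [sq_nonneg (f x)])
      have h3 : f x ^ 2 * Real.log (f x ^ 2) ≤ f x ^ 2 * g x := by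
        by_cases h0 : f x = 0
        · simp [h0]
        · gcongr
          exact Real.log_le_log (by positivity) (by linarith)
      nlinarith
    have hD : ∫ x, ‖fderiv ℝ g x‖ ^ 2 * (f x ^ 2 + ε) * Real.exp (-H x) ≤ 4 * I := by
      rw [hI, ← integral_const_mul]
      apply integral_mono_of_nonneg (Filter.Eventually.of_forall fun x => by
        have := hpos x; positivity) (iI.const_mul 4)
      refine Filter.Eventually.of_forall fun x => ?_
      simp only
      rw [← mul_assoc]
      refine mul_le_mul_of_nonneg_right ?_ (Real.exp_pos _).le
      rw [hgd, norm_smul, mul_pow, Real.norm_eq_abs, sq_abs]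
      have : (2 * f x / (f x ^ 2 + ε)) ^ 2 * (f x ^ 2 + ε) ≤ 4 := by
        have h0 := hpos x
        rw [div_pow, sq (f x ^ 2 + ε), div_mul_eq_mul_div, mul_div_mul_right _ _ h0.ne',
          div_le_iff₀ h0]
        nlinarith
      calc _ = (2 * f x / (f x ^ 2 + ε)) ^ 2 * (f x ^ 2 + ε) * ‖fderiv ℝ f x‖ ^ 2 := by ring
        _ ≤ _ := by gcongr
    have hD2 := mul_le_mul_of_nonneg_left hD (show 0 ≤ 1 / (2 * K) by positivity)
    have : 1 / (2 * K) * (4 * I) = 2 / K * I := by field_simp; ring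
    linarith
  have hlim : Continuous fun ε : ℝ =>
      2 / K * I + (1 + ε) * Real.log (1 + ε) - ε * Real.log ε := by
    have h1 := Real.continuous_mul_log
    have h2 := h1.comp (continuous_const.add continuous_id : Continuous fun ε : ℝ => 1 + ε)
    exact (continuous_const.add h2).sub h1
  have := ge_of_tendsto ((hlim.tendsto 0).mono_left nhdsWithin_le_nhds)
    (show ∀ᶠ ε : ℝ in nhdsWithin 0 (Set.Ioi 0), S ≤ _ from by
      filter_upwards [self_mem_nhdsWithin] with ε h using key ε h)
  simpa using this

/-- Bakry–Émery logarithmic Sobolev inequality for a Gibbs measure with uniformly convex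
Hamiltonian: if `D²H ≥ K > 0`, then for every smooth compactly supported `f` normalized in
`L²(μ)`, the entropy of `f²` is at most `(2/K)` times the Dirichlet form of `f`. -/
theorem bakry_emery_log_sobolev (m : ℕ) (K : ℝ) (hK : 0 < K)
    (H : EuclideanSpace ℝ (Fin m) → ℝ) (hH : ContDiff ℝ 2 H)
    (hconv : ∀ x v : EuclideanSpace ℝ (Fin m), K * ‖v‖ ^ 2 ≤ fderiv ℝ (fderiv ℝ H) x v v)
    (hint : Integrable fun x => Real.exp (-H x))
    (μ : Measure (EuclideanSpace ℝ (Fin m)))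
    (hμ : μ = volume.withDensity fun x =>
      ENNReal.ofReal (Real.exp (-H x) / ∫ x', Real.exp (-H x')))
    (f : EuclideanSpace ℝ (Fin m) → ℝ)
    (hf : ContDiff ℝ (⊤ : ℕ∞) f) (hfsupp : HasCompactSupport f)
    (hfnorm : ∫ x, f x ^ 2 ∂μ = 1) :
    ∫ x, f x ^ 2 * Real.log (f x ^ 2) ∂μ ≤ (2 / K) * ∫ x, ‖gradient f x‖ ^ 2 ∂μ := by
  have hcH := hH.continuous
  set Z := ∫ x', Real.exp (-H x') with hZ
  have hZ0 : 0 < Z := integral_exp_pos hint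
  let H' : EuclideanSpace ℝ (Fin m) → ℝ := fun x => H x + Real.log Z
  have hexp : ∀ x, Real.exp (-H' x) = Real.exp (-H x) / Z := by
    intro x
    simp only [H']
    rw [neg_add, Real.exp_add, Real.exp_neg (Real.log Z), Real.exp_log hZ0, div_eq_mul_inv]
  have hH' : ContDiff ℝ 2 H' := hH.add contDiff_const
  have hd : fderiv ℝ H' = fderiv ℝ H := by
    ext1 x
    simp only [H', fderiv_add_const]
  have hI : ∀ φ : EuclideanSpace ℝ (Fin m) → ℝ, ∫ x, φ x ∂μ = ∫ x, φ x * Real.exp (-H' x) := by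
    intro φ
    rw [hμ, integral_withDensity_eq_integral_toReal_smul (by fun_prop)
      (Filter.Eventually.of_forall fun x => ENNReal.ofReal_lt_top)]
    congr 1
    ext x
    rw [hexp, ENNReal.toReal_ofReal (by positivity), smul_eq_mul, mul_comm]
  rw [hI, hI]
  rw [hI] at hfnorm
  have hgrad : ∀ x, ‖gradient f x‖ = ‖fderiv ℝ f x‖ := fun x => by
    simp [gradient]
  simp only [hgrad]
  refine BE_core m K hK H' hH' (by rw [hd]; exact hconv) ?_ ?_ f hf hfsupp hfnorm
  · simp only [hexp]; exact hint.div_const Z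
  · simp only [hexp]; rw [integral_div, ← hZ, div_self hZ0.ne']
end
end
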